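/- arXiv:1403.5754 — 2 statements merged into one kernel-verified Lean document; each statement's English description precedes it below -/
import Mathlib

section
/- Let 3 ≤ r ≤ n. Let π₀ = B(V₀) and π₁ = B(V₁) be q-subgeometries of PG(r-1,q^n), both tangent to the line l_∞ = PG(U), with l_∞ not contained in the extension of any hyperplane of π₀ or of π₁. (a) If there exist a field automorphism σ of L and a σ-semilinear bijection θ : U → U whose induced map on points carries S(π₀,l_∞) onto S(π₁,l_∞), then there exist a field automorphism σ' of L and a σ'-semilinear bijection τ : L^r → L^r with τ(U) = U whose induced map on points carries π₀ onto π₁, i.e. { L·τ(v) : L·v ∈ π₀ } = π₁. (b) Conversely, if there exist a field automorphism σ' of L and a σ'-semilinear bijection τ : L^r → L^r with τ(U) = U and { L·τ(v) : L·v ∈ π₀ } = π₁, then { L·τ(v) : L·v ∈ S(π₀,l_∞) } = S(π₁,l_∞). -/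
open Submodule Module

/-- `BSet L X` is the set of projective points (1-dimensional `L`-subspaces of `W`)
spanned by the nonzero vectors of `X`. -/
def BSet (L : Type*) [Field L] {W : Type*} [AddCommGroup W] [Module L W]
    (X : Set W) : Set (Submodule L W) :=
  {P | ∃ x ∈ X, x ≠ 0 ∧ P = Submodule.span L {x}}

/-- The splash of the `q`-subgeometry `B(V)` of `PG(W)` on the line `PG(U)`:
the set of points of `PG(U)` lying in the `L`-span (extension) of some hyperplane
(`(r-1)`-dimensional `K`-subspace) of `V`. -/
def Splash (K L : Type*) [Field K] [Field L] [Algebra K L]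
    {W : Type*} [AddCommGroup W] [Module L W] [Module K W] [IsScalarTower K L W]
    (V : Submodule K W) (U : Submodule L W) (r : ℕ) : Set (Submodule L W) :=
  {P | Module.finrank L P = 1 ∧ P ≤ U ∧
    ∃ H : Submodule K W, H ≤ V ∧ Module.finrank K H = r - 1 ∧
      P ≤ Submodule.span L (H : Set W)}

/-!
Part (b) holds because a semilinear collineation maps the extension of a hyperplane of `π₀` into the
extension of a hyperplane of `π₁`.

For (a), choose a `K`-basis of `V₀` whose first vector `v` spans a point of the line, and write the
line as the span of `v` and of a vector `u` with coordinates `(0, c)`. The vector `u + x v` lies in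
the extension of a hyperplane if and only if its coordinates `(x, c)` are linearly dependent over
`K`. Since the line is in no such extension, `c` is linearly independent, so in the affine
coordinate `x` the splash is `Z ∪ {∞}`, where `Z` is the `K`-span of `c`. Similarly the second
splash is `Z' ∪ {∞}`.

A collineation between the splashes either fixes `∞`, and then (after translations) reads
`x ↦ α σ(x)` and maps `Z` onto `Z'`, or it maps `Z` onto `Z'` by `x ↦ d σ(x)⁻¹`. In the second case
Hua's identity shows that `Z'` is again of the form `α σ(Z)`. Given `α σ(Z) = Z'`, the tuple `c'`
may be replaced by `α σ(c)` by changing the basis of `V₁`, and the `σ`-semilinear map between the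
bases is the required collineation.
-/

section Coordinates

variable {L : Type*} [Field L]

theorem ringHom_algebraMap_mem_range {K : Type*} [Field K] [Finite K] [Algebra K L]
    (σ : L →+* L) (k : K) : σ (algebraMap K L k) ∈ (algebraMap K L).range := by
  have := Fintype.ofFinite K
  have hcard : 1 < Fintype.card K := Fintype.one_lt_card
  set p : Polynomial K := Polynomial.X ^ Fintype.card K - Polynomial.X with hp
  have hsplits : p.Splits := by
    rw [Polynomial.splits_iff_card_roots, FiniteField.roots_X_pow_card_sub_X,
      FiniteField.X_pow_card_sub_X_natDegree_eq K hcard]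
    rfl
  refine hsplits.mem_range_of_isRoot (FiniteField.X_pow_card_sub_X_ne_zero K hcard) ?_
  simp [hp, ← map_pow, FiniteField.pow_card]

theorem sq_mul_mem_of_inv_mem {S T : AddSubgroup L} (h : ∀ x, x ∈ S ↔ x⁻¹ ∈ T) {a y : L}
    (ha : a ∈ S) (hy : y ∈ T) : a ^ 2 * y ∈ S := by
  have h' : ∀ x, x ∈ T ↔ x⁻¹ ∈ S := fun x => by rw [h, inv_inv]
  rcases eq_or_ne a 0 with rfl | ha0
  · simp
  rcases eq_or_ne y 0 with rfl | hy0
  · simp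
  rcases eq_or_ne (1 - a * y) 0 with hay | hay
  · rwa [pow_two, mul_assoc, ← sub_eq_zero.1 hay, mul_one]
  -- Hua's identity
  have hua : a ^ 2 * y = a - (a⁻¹ + (y⁻¹ - a)⁻¹)⁻¹ := by
    have hsub : y⁻¹ - a = (1 - a * y) / y := by field_simp
    have hsum : a⁻¹ + (y⁻¹ - a)⁻¹ = (a * (1 - a * y))⁻¹ := by
      rw [hsub]
      field_simp
      ring
    rw [hsum, inv_inv]
    ring
  rw [hua]
  have hdiff : y⁻¹ - a ∈ S := S.sub_mem ((h' y).1 hy) ha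
  exact S.sub_mem ha ((h' _).1 (T.add_mem ((h a).1 ha) ((h _).1 hdiff)))

theorem sq_mul_mem_iff_of_inv_mem_iff {S T : AddSubgroup L} (h : ∀ x, x ∈ S ↔ x⁻¹ ∈ T) {a : L}
    (ha : a ∈ S) (ha0 : a ≠ 0) (y : L) : a ^ 2 * y ∈ S ↔ y ∈ T := by
  refine ⟨fun hy => ?_, sq_mul_mem_of_inv_mem h ha⟩
  have hT := sq_mul_mem_of_inv_mem (fun x => by rw [h, inv_inv]) ((h a).1 ha) hy
  rwa [← mul_assoc, ← mul_pow, inv_mul_cancel₀ ha0, one_pow, one_mul] at hT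

end Coordinates

section Line

variable {L M N : Type*} [Field L] [AddCommGroup M] [Module L M] [AddCommGroup N] [Module L N]

/-- The vectors representing the points of the line through `v` and `u` with affine coordinate in
`Z ∪ {∞}`, where `u + z • v` has coordinate `z` and `v` is the point at infinity. Like every cone
it contains `0`. -/
def affineCone (v u : M) (Z : AddSubgroup L) : Set M :=
  {w | ∃ c : L, w = c • v ∨ ∃ z ∈ Z, w = c • (u + z • v)}

theorem zero_mem_affineCone (v u : M) (Z : AddSubgroup L) : 0 ∈ affineCone v u Z :=
  ⟨0, .inl (zero_smul L v).symm⟩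

theorem left_mem_affineCone (v u : M) (Z : AddSubgroup L) : v ∈ affineCone v u Z :=
  ⟨1, .inl (one_smul L v).symm⟩

theorem right_mem_affineCone (v u : M) (Z : AddSubgroup L) : u ∈ affineCone v u Z :=
  ⟨1, .inr ⟨0, Z.zero_mem, by simp⟩⟩

theorem smul_mem_affineCone_iff {v u w : M} {Z : AddSubgroup L} {k : L} (hk : k ≠ 0) :
    k • w ∈ affineCone v u Z ↔ w ∈ affineCone v u Z := by
  constructor
  · rintro ⟨c, hc⟩
    refine ⟨k⁻¹ * c, hc.imp (fun h => ?_) (fun ⟨z, hz, h⟩ => ⟨z, hz, ?_⟩)⟩ <;>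
      rw [mul_smul, ← h, inv_smul_smul₀ hk]
  · rintro ⟨c, hc⟩
    refine ⟨k * c, hc.imp (fun h => ?_) (fun ⟨z, hz, h⟩ => ⟨z, hz, ?_⟩)⟩ <;> rw [h, mul_smul]

theorem add_smul_mem_affineCone_iff {v u : M} (h : LinearIndependent L ![v, u])
    {Z : AddSubgroup L} {x : L} : u + x • v ∈ affineCone v u Z ↔ x ∈ Z := by
  refine ⟨?_, fun hx => ⟨1, .inr ⟨x, hx, (one_smul L _).symm⟩⟩⟩
  rw [LinearIndependent.pair_iff] at h
  rintro ⟨c, hc | ⟨z, hz, hc⟩⟩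
  · exact absurd (h (x - c) 1 (by rw [← sub_eq_zero.2 hc]; module)).2 one_ne_zero
  · have hcoeff := h (x - c * z) (1 - c) (by rw [← sub_eq_zero.2 hc]; module)
    obtain rfl : c = 1 := (sub_eq_zero.1 hcoeff.2).symm
    rwa [sub_eq_zero.1 hcoeff.1, one_mul]

theorem affineCone_add_smul {v u : M} {Z : AddSubgroup L} {z : L} (hz : z ∈ Z) :
    affineCone v (u + z • v) Z = affineCone v u Z := by
  ext w
  refine exists_congr fun c => or_congr_right ⟨?_, ?_⟩
  · rintro ⟨y, hy, rfl⟩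
    exact ⟨z + y, Z.add_mem hz hy, by module⟩
  · rintro ⟨y, hy, rfl⟩
    exact ⟨y - z, Z.sub_mem hy hz, by module⟩

theorem map_mem_affineCone_iff {f : M →ₗ[L] N} (hf : Function.Injective f) {v u w : M}
    {Z : AddSubgroup L} : f w ∈ affineCone (f v) (f u) Z ↔ w ∈ affineCone v u Z := by
  simp only [affineCone, Set.mem_ofPred_eq, ← map_smul, ← map_add, hf.eq_iff]

section Semilinear

variable {σ : L →+* L} {v u : M} {v' u' : N} {Z Z' : AddSubgroup L}

theorem mem_iff_mul_mem_of_apply_eq_smul (h : LinearIndependent L ![v, u])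
    (h' : LinearIndependent L ![v', u'])
    {f : M →ₛₗ[σ] N} (hf : ∀ w, w ∈ affineCone v u Z ↔ f w ∈ affineCone v' u' Z')
    {l m : L} (hm : m ≠ 0)
    (hv : f v = l • v') (hu : f u = m • u') (z : L) : z ∈ Z ↔ l / m * σ z ∈ Z' := by
  have hz : f (u + z • v) = m • (u' + (l / m * σ z) • v') := by
    rw [map_add, map_smulₛₗ, hu, hv, smul_add, smul_smul, smul_smul]
    congr 2
    field_simp
  rw [← add_smul_mem_affineCone_iff h, hf, hz, smul_mem_affineCone_iff hm,
    add_smul_mem_affineCone_iff h']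

theorem mem_iff_mul_inv_mem_of_apply_eq_smul (h : LinearIndependent L ![v, u])
    (h' : LinearIndependent L ![v', u'])
    {f : M →ₛₗ[σ] N} (hf : ∀ w, w ∈ affineCone v u Z ↔ f w ∈ affineCone v' u' Z')
    {l m : L} (hl : l ≠ 0)
    (hv : f v = l • u') (hu : f u = m • v') (z : L) : z ∈ Z ↔ m / l * (σ z)⁻¹ ∈ Z' := by
  rcases eq_or_ne z 0 with rfl | hz0
  · simp
  have hσz : σ z ≠ 0 := (map_ne_zero σ).2 hz0
  have hz : f (u + z • v) = (σ z * l) • (u' + (m / l * (σ z)⁻¹) • v') := by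
    rw [map_add, map_smulₛₗ, hu, hv, smul_add, smul_smul, smul_smul, add_comm]
    congr 2
    field_simp
  rw [← add_smul_mem_affineCone_iff h, hf, hz, smul_mem_affineCone_iff (mul_ne_zero hσz hl),
    add_smul_mem_affineCone_iff h']

theorem exists_mul_mem_iff_of_mul_inv [RingHomSurjective σ] (hZ : ∃ z ∈ Z, z ≠ 0) {d : L}
    (hd : d ≠ 0) (h : ∀ z, z ∈ Z ↔ d * (σ z)⁻¹ ∈ Z') :
    ∃ α : L, α ≠ 0 ∧ ∀ z, z ∈ Z ↔ α * σ z ∈ Z' := by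
  obtain ⟨z₁, hz₁, hz₁0⟩ := hZ
  let S : AddSubgroup L := Z'.comap (AddMonoidHom.mulLeft d)
  let T : AddSubgroup L := Z.map (σ : L →+ L)
  have hT (z : L) : σ z ∈ T ↔ z ∈ Z := AddSubgroup.mem_map_iff_mem σ.injective
  have hST (x : L) : x ∈ S ↔ x⁻¹ ∈ T := by
    obtain ⟨z, rfl⟩ := RingHomSurjective.is_surjective (σ := σ) x
    rw [← map_inv₀, hT, h, map_inv₀, inv_inv]
    rfl
  have hmem : (σ z₁)⁻¹ ∈ S := (h z₁).1 hz₁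
  have hne : (σ z₁)⁻¹ ≠ 0 := inv_ne_zero ((map_ne_zero σ).2 hz₁0)
  refine ⟨d * (σ z₁)⁻¹ ^ 2, mul_ne_zero hd (pow_ne_zero 2 hne), fun z => ?_⟩
  rw [← hT, ← sq_mul_mem_iff_of_inv_mem_iff hST hmem hne, mul_assoc]
  rfl

variable {σ' : L →+* L} [RingHomInvPair σ σ'] [RingHomInvPair σ' σ] {θ : M ≃ₛₗ[σ] N}

theorem exists_apply_add_smul_eq_smul
    (hθ : ∀ w, w ∈ affineCone v u Z ↔ θ w ∈ affineCone v' u' Z')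
    {p : N} (hp : p ∈ affineCone v' u' Z') (hvp : ∀ c : L, c • θ v ≠ p) :
    ∃ z ∈ Z, ∃ m : L, m ≠ 0 ∧ θ (u + z • v) = m • p := by
  obtain ⟨c, hc | ⟨z, hz, hc⟩⟩ := (hθ (θ.symm p)).2 (by rwa [θ.apply_symm_apply])
  · exact absurd (by rw [← map_smulₛₗ, ← hc, θ.apply_symm_apply]) (hvp (σ c))
  have hp : p = σ c • θ (u + z • v) := by rw [← map_smulₛₗ, ← hc, θ.apply_symm_apply]
  have hc0 : σ c ≠ 0 := fun h => hvp 0 (by rw [hp, h, zero_smul, zero_smul])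
  exact ⟨z, hz, (σ c)⁻¹, inv_ne_zero hc0, by rw [hp, inv_smul_smul₀ hc0]⟩

theorem exists_mul_mem_iff_of_affineCone (h : LinearIndependent L ![v, u])
    (h' : LinearIndependent L ![v', u'])
    (hθ : ∀ w, w ∈ affineCone v u Z ↔ θ w ∈ affineCone v' u' Z') (hZ : ∃ z ∈ Z, z ≠ 0) :
    ∃ α : L, α ≠ 0 ∧ ∀ z, z ∈ Z ↔ α * σ z ∈ Z' := by
  have hθv : θ v ≠ 0 := θ.map_ne_zero_iff.2 (h.ne_zero 0)
  have shift (z : L) : LinearIndependent L ![v, u + z • v] := by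
    rwa [add_comm, LinearIndependent.pair_add_smul_right_iff]
  -- The cones do not change when `u` and `u'` are shifted by elements of `Z` and `Z'`. Hence, if
  -- `θ` fixes the point at infinity, one may assume that it also fixes the point `0`; otherwise one
  -- may assume that it interchanges the two.
  obtain ⟨l, hl | ⟨z', hz', hl⟩⟩ := (hθ v).1 (left_mem_affineCone v u Z) <;>
    have hl0 : l ≠ 0 := left_ne_zero_of_smul (hl ▸ hθv)
  · have hne (c : L) : c • θ v ≠ u' := by
      rw [hl, smul_smul]
      exact (LinearIndependent.pair_iff' (h'.ne_zero 0)).1 h' _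
    obtain ⟨z, hz, m, hm, hu⟩ :=
      exists_apply_add_smul_eq_smul hθ (right_mem_affineCone v' u' Z') hne
    rw [← affineCone_add_smul hz] at hθ
    exact ⟨l / m, div_ne_zero hl0 hm,
      mem_iff_mul_mem_of_apply_eq_smul (shift z) h' (f := θ) hθ hm hl hu⟩
  · rw [← affineCone_add_smul hz'] at hθ
    rw [← LinearIndependent.pair_add_smul_right_iff z', add_comm] at h'
    have hne (c : L) : c • θ v ≠ v' := by
      rw [hl, smul_smul]
      exact (LinearIndependent.pair_iff' (h'.ne_zero 1)).1 (LinearIndependent.pair_symm_iff.1 h') _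
    obtain ⟨z, hz, m, hm, hu⟩ :=
      exists_apply_add_smul_eq_smul hθ (left_mem_affineCone v' _ Z') hne
    rw [← affineCone_add_smul hz] at hθ
    exact exists_mul_mem_iff_of_mul_inv hZ (div_ne_zero hm hl0)
      (mem_iff_mul_inv_mem_of_apply_eq_smul (shift z) h' (f := θ) hθ hl0 hl hu)

end Semilinear

end Line

section PointImage

variable {L M E E' : Type*} [Field L] [AddCommGroup M] [Module L M] [AddCommGroup E] [Module L E]
  [AddCommGroup E'] [Module L E'] {σ σ' : L →+* L} [RingHomInvPair σ σ'] [RingHomInvPair σ' σ]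

/-- The image of the point set `S` of `PG(E)` under the map on points induced by `f`, where the
domain `M` of `f` is placed in `E` by `ι` (the identity, or the inclusion of a line). -/
def pointImage (ι : M → E) (f : M → E') (S : Set (Submodule L E)) : Set (Submodule L E') :=
  {Q | ∃ x : M, ι x ≠ 0 ∧ span L {ι x} ∈ S ∧ Q = span L {f x}}

theorem span_mem_iff_of_pointImage_eq [RingHomSurjective σ] {ι : M →ₗ[L] E} {f : M →ₛₗ[σ] E'}
    (hf : Function.Injective f) {S : Set (Submodule L E)} {S' : Set (Submodule L E')}
    (h : pointImage ι f S = S') {x : M} (hx : ι x ≠ 0) :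
    span L {ι x} ∈ S ↔ span L {f x} ∈ S' := by
  subst h
  refine ⟨fun hS => ⟨x, hx, hS, rfl⟩, fun ⟨y, _, hS, hxy⟩ => ?_⟩
  have hspan : span L {x} = span L {y} := Submodule.map_injective_of_injective hf (by
    rwa [Submodule.map_span, Submodule.map_span, Set.image_singleton, Set.image_singleton])
  rwa [← Set.image_singleton, ← Submodule.map_span, hspan, Submodule.map_span,
    Set.image_singleton]

theorem pointImage_id_eq {τ : E ≃ₛₗ[σ] E'} {S : Set (Submodule L E)} {S' : Set (Submodule L E')}
    (hS' : ∀ Q ∈ S', ∃ w ≠ 0, Q = span L {w})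
    (h : ∀ x ≠ 0, span L {x} ∈ S ↔ span L {τ x} ∈ S') : pointImage id τ S = S' := by
  ext Q
  refine ⟨fun ⟨x, hx, hxS, hQ⟩ => hQ ▸ (h x hx).1 hxS, fun hQ => ?_⟩
  obtain ⟨w, hw, rfl⟩ := hS' Q hQ
  have hx : τ.symm w ≠ 0 := τ.symm.map_ne_zero_iff.2 hw
  exact ⟨τ.symm w, hx, (h _ hx).2 (by rwa [τ.apply_symm_apply]), by rw [τ.apply_symm_apply]⟩

theorem pointImage_id_bSet (τ : E ≃ₛₗ[σ] E') (X : Set E) :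
    pointImage id τ (BSet L X) = BSet L (τ '' X) := by
  ext Q
  constructor
  · rintro ⟨x, -, ⟨y, hy, hy0, hxy⟩, rfl⟩
    refine ⟨τ y, ⟨y, hy, rfl⟩, τ.map_ne_zero_iff.2 hy0, ?_⟩
    simpa [Submodule.map_span] using congrArg (Submodule.map τ.toLinearMap) hxy
  · rintro ⟨_, ⟨y, hy, rfl⟩, hy0, rfl⟩
    have hy0 : y ≠ 0 := τ.map_ne_zero_iff.1 hy0
    exact ⟨y, hy0, ⟨y, hy, hy0, rfl⟩, rfl⟩

end PointImage

section Hyperplanes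

variable {K L E : Type*} [Field K] [Field L] [Algebra K L] [AddCommGroup E] [Module L E]
  [Module K E]

theorem exists_dual_ne_zero_le_ker {V H : Submodule K E} (h : ¬ V ≤ H) :
    ∃ f : Module.Dual K V, f ≠ 0 ∧ ∀ x : V, (x : E) ∈ H → f x = 0 := by
  obtain ⟨f, hf, hfle⟩ := Submodule.exists_le_ker_of_lt_top (H.comap V.subtype)
    (lt_top_iff_ne_top.2 fun htop => h (Submodule.comap_subtype_eq_top.1 htop))
  exact ⟨f, hf, fun x hx => hfle hx⟩

theorem finrank_map_subtype_ker {m : ℕ} {V : Submodule K E} (hV : finrank K V = m + 1)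
    {f : Module.Dual K V} (hf : f ≠ 0) : finrank K ((LinearMap.ker f).map V.subtype) = m := by
  have : FiniteDimensional K V := FiniteDimensional.of_finrank_pos (by omega)
  have h := Module.Dual.finrank_ker_add_one_of_ne_zero hf
  rw [Submodule.finrank_map_subtype_eq]
  omega

theorem exists_hyperplane_ge {m : ℕ} {V H₀ : Submodule K E} (hV : finrank K V = m + 1)
    (hle : H₀ ≤ V) (hlt : H₀ ≠ V) :
    ∃ H : Submodule K E, H₀ ≤ H ∧ H ≤ V ∧ finrank K H = m := by
  obtain ⟨f, hf, hfH₀⟩ := exists_dual_ne_zero_le_ker fun h => hlt (le_antisymm hle h)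
  exact ⟨(LinearMap.ker f).map V.subtype, fun x hx => ⟨⟨x, hle hx⟩, hfH₀ ⟨x, hle hx⟩ hx, rfl⟩,
    Submodule.map_subtype_le _ _, finrank_map_subtype_ker hV hf⟩

variable [IsScalarTower K L E]

theorem finrank_span_range_basis {ι : Type*} [Fintype ι] (b : Basis ι L E) :
    finrank K (span K (Set.range b)) = Fintype.card ι :=
  finrank_eq_card_basis (b.restrictScalars K)

theorem sum_apply_smul_repr {ι : Type*} [Fintype ι] (b : Basis ι L E)
    (f : Module.Dual K (span K (Set.range b))) (x : span K (Set.range b)) :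
    ∑ i, f (b.restrictScalars K i) • b.repr x i = algebraMap K L (f x) := by
  conv_rhs => rw [← (b.restrictScalars K).sum_repr x, map_sum, map_sum]
  simp [Algebra.smul_def, mul_comm]

theorem exists_sum_smul_repr_eq_zero_of_ne {H : Submodule K E} {ι : Type*} [Fintype ι]
    (b : Basis ι L E) (hle : H ≤ span K (Set.range b)) (hne : H ≠ span K (Set.range b)) :
    ∃ a : ι → K, a ≠ 0 ∧ ∀ x ∈ span L (H : Set E), ∑ i, a i • b.repr x i = 0 := by
  obtain ⟨f, hf, hfH⟩ := exists_dual_ne_zero_le_ker fun h => hne (le_antisymm hle h)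
  let φ : E →ₗ[L] L := ∑ i, algebraMap K L (f (b.restrictScalars K i)) • b.coord i
  have hφ (x : E) : φ x = ∑ i, f (b.restrictScalars K i) • b.repr x i := by
    simp [φ, Algebra.smul_def]
  have hker : span L (H : Set E) ≤ LinearMap.ker φ := span_le.2 fun y hy => by
    rw [SetLike.mem_coe, LinearMap.mem_ker, hφ,
      sum_apply_smul_repr b f ⟨y, hle hy⟩, hfH ⟨y, hle hy⟩ hy, map_zero]
  refine ⟨fun i => f (b.restrictScalars K i), fun h => hf ?_, fun x hx => hφ x ▸ hker hx⟩
  exact (b.restrictScalars K).ext fun i => congrFun h i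

theorem exists_hyperplane_forall_mem_span {m : ℕ} (b : Basis (Fin (m + 1)) L E)
    {a : Fin (m + 1) → K} (ha : a ≠ 0) :
    ∃ H ≤ span K (Set.range b), finrank K H = m ∧
      ∀ x, ∑ i, a i • b.repr x i = 0 → x ∈ span L (H : Set E) := by
  obtain ⟨j, hj⟩ := Function.ne_iff.1 ha
  let B := b.restrictScalars K
  let f : Module.Dual K (span K (Set.range b)) := ∑ i, a i • B.coord i
  have hfB (i) : f (B i) = a i := by simp [f, Finsupp.single_apply]
  have hf : f ≠ 0 := fun h => hj (by rw [← hfB, h]; rfl)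
  have hV : finrank K (span K (Set.range b)) = m + 1 := by
    rw [finrank_span_range_basis, Fintype.card_fin]
  refine ⟨(LinearMap.ker f).map (Submodule.subtype _), Submodule.map_subtype_le _ _,
    finrank_map_subtype_ker hV hf, fun x hx => ?_⟩
  have hdiff (i) : b i - ((a j)⁻¹ * a i) • b j ∈ (LinearMap.ker f).map (Submodule.subtype _) :=
    ⟨B i - ((a j)⁻¹ * a i) • B j, by simp [hfB, mul_right_comm, inv_mul_cancel₀ hj], by simp [B]⟩
  have hsum : x = ∑ i, b.repr x i • (b i - ((a j)⁻¹ * a i) • b j) := calc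
    x = ∑ i, b.repr x i • b i - (a j)⁻¹ • (∑ i, a i • b.repr x i) • b j := by
      rw [hx, b.sum_repr, zero_smul, smul_zero, sub_zero]
    _ = ∑ i, b.repr x i • (b i - ((a j)⁻¹ * a i) • b j) := by
      rw [Finset.sum_smul, Finset.smul_sum, ← Finset.sum_sub_distrib]
      refine Finset.sum_congr rfl fun i _ => ?_
      rw [smul_sub, smul_comm (b.repr x i), mul_smul, smul_assoc]
  rw [hsum]
  exact sum_mem fun i _ => smul_mem _ _ (subset_span (hdiff i))

theorem exists_hyperplane_subset_span_iff {m : ℕ} (b : Basis (Fin (m + 1)) L E) (X : Set E) :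
    (∃ H ≤ span K (Set.range b), finrank K H = m ∧ X ⊆ span L (H : Set E)) ↔
      ∃ a : Fin (m + 1) → K, a ≠ 0 ∧ ∀ x ∈ X, ∑ i, a i • b.repr x i = 0 := by
  constructor
  · rintro ⟨H, hle, hrank, hX⟩
    have hne : H ≠ span K (Set.range b) := by
      rintro rfl
      rw [finrank_span_range_basis, Fintype.card_fin] at hrank
      omega
    obtain ⟨a, ha, hH⟩ := exists_sum_smul_repr_eq_zero_of_ne b hle hne
    exact ⟨a, ha, fun x hx => hH x (hX hx)⟩
  · rintro ⟨a, ha, hX⟩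
    obtain ⟨H, hle, hrank, hH⟩ := exists_hyperplane_forall_mem_span b ha
    exact ⟨H, hle, hrank, fun x hx => hH x (hX x hx)⟩

end Hyperplanes

section Frames

variable {K L E : Type*} [Field K] [Field L] [Algebra K L] [AddCommGroup E] [Module L E]
  [Module K E] {m : ℕ}

theorem exists_basis_apply_eq {K V ι : Type*} [Field K] [AddCommGroup V] [Module K V]
    [FiniteDimensional K V] [Fintype ι] (hV : finrank K V = Fintype.card ι) (i : ι) {v : V}
    (hv : v ≠ 0) : ∃ B : Basis ι K V, B i = v := by
  classical
  have hli : LinearIndepOn K id {v} := LinearIndepOn.singleton hv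
  let B := Basis.extend hli
  have := FiniteDimensional.fintypeBasisIndex B
  let e : hli.extend (Set.subset_univ _) ≃ ι :=
    Fintype.equivOfCardEq (by rw [← hV, finrank_eq_card_basis B])
  let k : hli.extend (Set.subset_univ _) := ⟨v, hli.subset_extend _ rfl⟩
  refine ⟨B.reindex (e.trans (Equiv.swap (e k) i)), ?_⟩
  simp [B, k]

theorem exists_basis_coe_eq [IsScalarTower K L E] {ι : Type*} [Fintype ι] {V : Submodule K E}
    (hE : finrank L E = Fintype.card ι) (hspan : span L (V : Set E) = ⊤) {g : ι → E}
    (hg : span K (Set.range g) = V) : ∃ b : Basis ι L E, ⇑b = g := by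
  have htop : ⊤ ≤ span L (Set.range g) := by
    rw [← hspan, span_le, ← hg]
    exact span_le_restrictScalars K L _
  exact ⟨basisOfTopLeSpanOfCardEqFinrank g htop hE.symm,
    coe_basisOfTopLeSpanOfCardEqFinrank _ _ _⟩

theorem exists_span_pair_eq {U : Submodule L E} (hU : finrank L U = 2) {v : E} (hv : v ∈ U)
    (hv0 : v ≠ 0) : ∃ u, span L {v, u} = U := by
  obtain ⟨u, hu⟩ := exists_linearIndependent_pair_of_one_lt_finrank (R := L) (M := U)
    (by omega) (x := ⟨v, hv⟩) (by simpa using hv0)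
  have htop := hu.span_eq_top_of_card_eq_finrank (by simp [hU])
  refine ⟨u, ?_⟩
  have := congrArg (Submodule.map U.subtype) htop
  rw [Set.pair_comm]
  simpa [Submodule.map_span, Matrix.range_cons, Set.image_insert_eq, Set.singleton_union] using this

theorem span_pair_smul_add (v w : E) (r : L) : span L {v, r • v + w} = span L {v, w} := by
  ext z
  simp only [mem_span_pair]
  constructor
  · rintro ⟨x, y, rfl⟩
    exact ⟨x + y * r, y, by module⟩
  · rintro ⟨x, y, rfl⟩
    exact ⟨x - y * r, y, by module⟩

/-- The vector with coordinates `(0, c)` in the basis `b`. In an `IsLineFrame` it is the origin of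
the affine coordinate on the line, with `b 0` as the point at infinity. -/
noncomputable def lineVector (b : Basis (Fin (m + 1)) L E) (c : Fin m → L) : E :=
  ∑ i, c i • b i.succ

theorem repr_smul_add_smul_lineVector (b : Basis (Fin (m + 1)) L E) (c : Fin m → L) (x y : L) :
    ⇑(b.repr (x • b 0 + y • lineVector b c)) = Fin.cons x (y • c) := by
  have h : x • b 0 + y • lineVector b c = ∑ i, (Fin.cons x (y • c) : Fin (m + 1) → L) i • b i := by
    simp [Fin.sum_univ_succ, lineVector, Finset.smul_sum, smul_smul]
  rw [h, b.repr_sum_self]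

/-- Coordinates adapted to a subgeometry `B(V)` and a line `PG(U)` meeting it, not contained in the
extension of a hyperplane: `b` is a `K`-basis of `V` whose first vector spans a common point of
`B(V)` and `PG(U)`, and the line is spanned by the vectors with coordinates `(1, 0)` and
`(0, c)`. -/
structure IsLineFrame (V : Submodule K E) (U : Submodule L E) (b : Basis (Fin (m + 1)) L E)
    (c : Fin m → L) : Prop where
  span_range : span K (Set.range b) = V
  span_pair : span L {b 0, lineVector b c} = U
  not_le_span : ∀ H ≤ V, finrank K H = m → ¬ U ≤ span L (H : Set E)

namespace IsLineFrame

variable {V : Submodule K E} {U : Submodule L E} {b : Basis (Fin (m + 1)) L E} {c : Fin m → L}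
  [IsScalarTower K L E]

theorem finrank_eq (h : IsLineFrame V U b c) : finrank K V = m + 1 := by
  rw [← h.span_range, finrank_span_range_basis, Fintype.card_fin]

theorem linearIndependent (h : IsLineFrame V U b c) : LinearIndependent K c := by
  by_contra hc
  obtain ⟨a, ha, i, hi⟩ := Fintype.not_linearIndependent_iff.1 hc
  have hne : (Fin.cons 0 a : Fin (m + 1) → K) ≠ 0 := fun h0 => hi (congrFun h0 i.succ)
  have hu : ⇑(b.repr (lineVector b c)) = Fin.cons 0 c := by
    simpa using repr_smul_add_smul_lineVector b c 0 1
  obtain ⟨H, hHV, hH, hle⟩ := (exists_hyperplane_subset_span_iff (K := K) b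
    {b 0, lineVector b c}).2 ⟨Fin.cons 0 a, hne, by
      rintro x (rfl | rfl)
      · simp [Fin.sum_univ_succ]
      · simpa [hu, Fin.sum_univ_succ] using ha⟩
  exact h.not_le_span H (h.span_range ▸ hHV) hH (h.span_pair ▸ span_le.2 hle)

theorem linearIndependent_pair (h : IsLineFrame V U b c) (hm : 0 < m) :
    LinearIndependent L ![b 0, lineVector b c] := by
  rw [LinearIndependent.pair_iff]
  intro x y hxy
  have hrepr := repr_smul_add_smul_lineVector b c x y
  rw [hxy, map_zero] at hrepr
  have hy : y * c ⟨0, hm⟩ = 0 := (congrFun hrepr (Fin.succ ⟨0, hm⟩)).symm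
  exact ⟨(congrFun hrepr 0).symm,
    (mul_eq_zero.1 hy).resolve_right (h.linearIndependent.ne_zero _)⟩

theorem span_singleton_mem_splash_iff_not_linearIndependent (h : IsLineFrame V U b c) {w : E}
    (hw : w ∈ U) (hw0 : w ≠ 0) :
    span L {w} ∈ Splash K L V U (m + 1) ↔ ¬ LinearIndependent K (b.repr w) := by
  have hmem : span L {w} ∈ Splash K L V U (m + 1) ↔
      ∃ H ≤ V, finrank K H = m ∧ ({w} : Set E) ⊆ span L (H : Set E) := by
    simp only [Splash, Set.mem_ofPred_eq, finrank_span_singleton hw0, span_singleton_le_iff_mem,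
      hw, true_and, add_tsub_cancel_right, Set.singleton_subset_iff, SetLike.mem_coe]
  rw [hmem, ← h.span_range, exists_hyperplane_subset_span_iff,
    Fintype.not_linearIndependent_iff]
  simp only [Set.mem_singleton_iff, forall_eq, Function.ne_iff, Pi.zero_apply, and_comm]

theorem span_singleton_mem_splash_iff (h : IsLineFrame V U b c) (hm : 0 < m) {w : E}
    (hw : w ∈ U) (hw0 : w ≠ 0) :
    span L {w} ∈ Splash K L V U (m + 1) ↔
      w ∈ affineCone (b 0) (lineVector b c) (span K (Set.range c)).toAddSubgroup := by
  rw [h.span_singleton_mem_splash_iff_not_linearIndependent hw hw0]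
  obtain ⟨x, y, rfl⟩ := mem_span_pair.1 (h.span_pair.symm ▸ hw)
  rw [repr_smul_add_smul_lineVector, linearIndependent_finCons]
  rcases eq_or_ne y 0 with rfl | hy
  · have hc : ¬ LinearIndependent K ((0 : L) • c) := fun hc => hc.ne_zero ⟨0, hm⟩ (zero_smul L _)
    simp only [hc, false_and, not_false_eq_true, true_iff]
    exact ⟨x, .inl (by rw [zero_smul, add_zero])⟩
  have hmul : Function.Injective (LinearMap.mulLeft K y) := mul_right_injective₀ hy
  have hc : LinearIndependent K (y • c) :=
    h.linearIndependent.map' (LinearMap.mulLeft K y) (LinearMap.ker_eq_bot.2 hmul)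
  have hspan : x ∈ span K (Set.range (y • c)) ↔ x / y ∈ span K (Set.range c) := by
    have hx : LinearMap.mulLeft K y (x / y) = x := mul_div_cancel₀ x hy
    conv_lhs =>
      rw [show y • c = LinearMap.mulLeft K y ∘ c from rfl, Set.range_comp, span_image, ← hx,
        ← SetLike.mem_coe, map_coe, hmul.mem_set_image, SetLike.mem_coe]
  have hw : x • b 0 + y • lineVector b c = y • (lineVector b c + (x / y) • b 0) := by
    rw [smul_add, smul_smul, mul_div_cancel₀ x hy, add_comm]
  rw [hw, smul_mem_affineCone_iff hy, add_smul_mem_affineCone_iff (h.linearIndependent_pair hm),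
    not_and_not_right, hspan]
  exact ⟨fun hx => hx hc, fun hx _ => hx⟩

theorem exists_basis_of_forall_mem_span (h : IsLineFrame V U b c) {e : Fin m → L}
    (hce : ∀ j, c j ∈ span K (Set.range e)) :
    ∃ g : Basis (Fin (m + 1)) L E, IsLineFrame V U g e := by
  choose A hA using fun j => mem_span_range_iff_exists_fun K |>.1 (hce j)
  let g : Fin (m + 1) → E := Fin.cons (b 0) fun i => ∑ j, A j i • b j.succ
  have hline : ∑ i, e i • g i.succ = lineVector b c := by
    simp only [g, Fin.cons_succ, lineVector, ← hA, Finset.sum_smul, Finset.smul_sum]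
    rw [Finset.sum_comm]
    exact Finset.sum_congr rfl fun j _ => Finset.sum_congr rfl fun i _ => by
      rw [smul_comm, smul_assoc]
  have hbV (i) : b i ∈ V := h.span_range ▸ subset_span ⟨i, rfl⟩
  have hgmem (i) : g i ∈ V := by
    refine Fin.cases (hbV 0) (fun i => ?_) i
    simp only [g, Fin.cons_succ]
    exact sum_mem fun j _ => smul_mem V (A j i) (hbV j.succ)
  have hgV : span K (Set.range g) ≤ V := span_le.2 (Set.range_subset_iff.2 hgmem)
  -- Otherwise a hyperplane containing every `g i` would have the line in its extension.
  have hg : span K (Set.range g) = V := by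
    by_contra hne
    obtain ⟨H, hgH, hHV, hH⟩ := exists_hyperplane_ge h.finrank_eq hgV hne
    have hgH (i) : g i ∈ span L (H : Set E) := subset_span (hgH (subset_span ⟨i, rfl⟩))
    refine h.not_le_span H hHV hH (h.span_pair ▸ span_le.2 (Set.pair_subset (hgH 0) ?_))
    exact hline ▸ sum_mem fun i _ => smul_mem _ _ (hgH i.succ)
  have hspan : span L (V : Set E) = ⊤ :=
    top_le_iff.1 (b.span_eq ▸ span_mono (Set.range_subset_iff.2 hbV))
  obtain ⟨g', hg'⟩ := exists_basis_coe_eq (finrank_eq_card_basis b) hspan hg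
  have hg0 : g' 0 = b 0 := congrFun hg' 0
  have hge : lineVector g' e = lineVector b c := by rw [← hline, lineVector, hg']
  exact ⟨g', by rw [hg', hg], by rw [hg0, hge, h.span_pair], h.not_le_span⟩

end IsLineFrame

theorem exists_isLineFrame [IsScalarTower K L E] {V : Submodule K E} {U : Submodule L E}
    (hE : finrank L E = m + 1) (hV : finrank K V = m + 1) (hspan : span L (V : Set E) = ⊤)
    (hU : finrank L U = 2) (hmeet : ∃ P, P ∈ BSet L (V : Set E) ∧ P ≤ U)
    (hext : ∀ H ≤ V, finrank K H = m → ¬ U ≤ span L (H : Set E)) :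
    ∃ (b : Basis (Fin (m + 1)) L E) (c : Fin m → L), IsLineFrame V U b c := by
  have : FiniteDimensional K V := FiniteDimensional.of_finrank_pos (by omega)
  obtain ⟨_, ⟨v, hv, hv0, rfl⟩, hvU⟩ := hmeet
  obtain ⟨B, hB⟩ := exists_basis_apply_eq (hV.trans (Fintype.card_fin _).symm) 0
    (v := ⟨v, hv⟩) (by simpa using hv0)
  have hBV : span K (Set.range fun i => (B i : E)) = V := by
    have := congrArg (Submodule.map V.subtype) B.span_eq
    rwa [Submodule.map_span, ← Set.range_comp, Submodule.map_subtype_top] at this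
  obtain ⟨b, hb⟩ := exists_basis_coe_eq (hE.trans (Fintype.card_fin _).symm) hspan hBV
  have hb0 : b 0 = v := by simp [hb, hB]
  obtain ⟨u, hu⟩ := exists_span_pair_eq hU ((span_singleton_le_iff_mem v U).1 hvU) hv0
  have hu' : u = b.repr u 0 • b 0 + lineVector b fun i => b.repr u i.succ := by
    conv_lhs => rw [← b.sum_repr u, Fin.sum_univ_succ]
    rfl
  exact ⟨b, _, hb ▸ hBV, by rw [← hu, hu', ← hb0, span_pair_smul_add], hext⟩

end Frames

section Collineations

variable {K L E E' : Type*} [Field K] [Field L] [Algebra K L]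
  [AddCommGroup E] [Module L E] [Module K E] [IsScalarTower K L E]
  [AddCommGroup E'] [Module L E'] [Module K E']
  {m : ℕ} {V : Submodule K E} {V' : Submodule K E'} {U : Submodule L E} {U' : Submodule L E'}

theorem exists_hyperplane_map {σ : L →+* L} {f : E →ₛₗ[σ] E'} (hV' : finrank K V' = m + 1)
    (hf : ∀ v ∈ V, v ≠ 0 → span L {f v} ∈ BSet L (V' : Set E')) {H : Submodule K E} (hHV : H ≤ V)
    (hH : finrank K H = m) [FiniteDimensional K H] :
    ∃ H' ≤ V', finrank K H' = m ∧ ∀ x ∈ span L (H : Set E), f x ∈ span L (H' : Set E') := by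
  let B := finBasisOfFinrankEq K H hH
  have hw (i) : ∃ w ∈ V', f (B i) ∈ span L {w} := by
    obtain ⟨w, hw, -, hspan⟩ := hf (B i) (hHV (B i).2) (by simpa using B.ne_zero i)
    exact ⟨w, hw, hspan ▸ mem_span_singleton_self _⟩
  choose w hwV' hfw using hw
  have hlt : span K (Set.range w) ≠ V' := fun h => by
    have := finrank_range_le_card (R := K) w
    rw [Set.finrank, h, hV', Fintype.card_fin] at this
    omega
  obtain ⟨H', hwH', hH'V', hH'⟩ :=
    exists_hyperplane_ge hV' (span_le.2 (Set.range_subset_iff.2 hwV')) hlt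
  refine ⟨H', hH'V', hH', ?_⟩
  have hB : span L (Set.range fun i => (B i : E)) ≤ (span L (H' : Set E')).comap f :=
    span_le.2 <| Set.range_subset_iff.2 fun i => span_mono
      (Set.singleton_subset_iff.2 (hwH' (subset_span ⟨i, rfl⟩))) (hfw i)
  have hHB : (H : Set E) ⊆ span L (Set.range fun i => (B i : E)) := fun x hx => by
    refine span_le_restrictScalars K L _ ?_
    have := mem_map_of_mem (f := H.subtype) (B.mem_span ⟨x, hx⟩)
    rwa [map_span, ← Set.range_comp] at this
  exact fun x hx => hB (span_le.2 hHB hx)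

variable [IsScalarTower K L E']

theorem span_singleton_map_mem_splash {σ : L →+* L} {f : E →ₛₗ[σ] E'} (hV : finrank K V = m + 1)
    (hV' : finrank K V' = m + 1) (hf : ∀ v ∈ V, v ≠ 0 → span L {f v} ∈ BSet L (V' : Set E'))
    (hU : ∀ x ∈ U, f x ∈ U') {x : E} (hx0 : f x ≠ 0) (hx : span L {x} ∈ Splash K L V U (m + 1)) :
    span L {f x} ∈ Splash K L V' U' (m + 1) := by
  have : FiniteDimensional K V := FiniteDimensional.of_finrank_pos (by omega)
  obtain ⟨-, hxU, H, hHV, hH, hxH⟩ := hx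
  have := finiteDimensional_of_le hHV
  obtain ⟨H', hH'V', hH', hmap⟩ := exists_hyperplane_map hV' hf hHV hH
  rw [span_singleton_le_iff_mem] at hxU hxH
  exact ⟨finrank_span_singleton hx0, (span_singleton_le_iff_mem _ _).2 (hU x hxU), H', hH'V', hH',
    (span_singleton_le_iff_mem _ _).2 (hmap x hxH)⟩

variable {σ σ' : L →+* L} [RingHomInvPair σ σ'] [RingHomInvPair σ' σ] {τ : E ≃ₛₗ[σ] E'}

theorem pointImage_id_splash (hV : finrank K V = m + 1) (hV' : finrank K V' = m + 1)
    (hU : τ '' (U : Set E) = U')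
    (hB : pointImage id τ (BSet L (V : Set E)) = BSet L (V' : Set E')) :
    pointImage id τ (Splash K L V U (m + 1)) = Splash K L V' U' (m + 1) := by
  have hmem (x : E) (hx : x ≠ 0) :
      span L {x} ∈ BSet L (V : Set E) ↔ span L {τ x} ∈ BSet L (V' : Set E') :=
    span_mem_iff_of_pointImage_eq (ι := LinearMap.id) (f := τ.toLinearMap) τ.injective hB hx
  have hf (v : E) (hv : v ∈ V) (hv0 : v ≠ 0) : span L {τ v} ∈ BSet L (V' : Set E') :=
    (hmem v hv0).1 ⟨v, hv, hv0, rfl⟩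
  have hf' (v : E') (hv : v ∈ V') (hv0 : v ≠ 0) : span L {τ.symm v} ∈ BSet L (V : Set E) :=
    (hmem _ (τ.symm.map_ne_zero_iff.2 hv0)).2 ⟨v, hv, hv0, by rw [τ.apply_symm_apply]⟩
  have hτU (x : E) (hx : x ∈ U) : τ x ∈ U' := hU.subset ⟨x, hx, rfl⟩
  have hτU' (x : E') (hx : x ∈ U') : τ.symm x ∈ U := by
    obtain ⟨y, hy, rfl⟩ := hU.superset hx
    rwa [τ.symm_apply_apply]
  refine pointImage_id_eq (fun Q hQ => ?_) fun x hx => ⟨fun h => ?_, fun h => ?_⟩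
  · obtain ⟨w, hw, hwQ⟩ := finrank_eq_one_iff'.1 hQ.1
    refine ⟨w, by simpa using hw, le_antisymm (fun x hx => ?_) (by simp)⟩
    obtain ⟨c, hc⟩ := hwQ ⟨x, hx⟩
    exact mem_span_singleton.2 ⟨c, congrArg Subtype.val hc⟩
  · exact span_singleton_map_mem_splash (f := τ.toLinearMap) hV hV' hf hτU
      (τ.map_ne_zero_iff.2 hx) h
  · have := span_singleton_map_mem_splash (f := τ.symm.toLinearMap) hV' hV hf' hτU'
      (by simpa using hx) h
    simpa using this

theorem map_mem_span_image {σ : L →+* L}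
    (hσ : ∀ k : K, σ (algebraMap K L k) ∈ (algebraMap K L).range) (f : E →ₛₗ[σ] E') {X : Set E}
    {x : E} (hx : x ∈ span K X) : f x ∈ span K (f '' X) := by
  induction hx using span_induction with
  | mem x hx => exact subset_span ⟨x, hx, rfl⟩
  | zero => simp
  | add x y _ _ hx hy => rw [map_add]; exact add_mem hx hy
  | smul k x _ hx =>
    obtain ⟨k', hk'⟩ := hσ k
    rw [← algebraMap_smul L, map_smulₛₗ, ← hk', algebraMap_smul]
    exact smul_mem _ _ hx

theorem image_span_eq (hσ : ∀ k : K, σ (algebraMap K L k) ∈ (algebraMap K L).range)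
    (hσ' : ∀ k : K, σ' (algebraMap K L k) ∈ (algebraMap K L).range) (τ : E ≃ₛₗ[σ] E') (X : Set E) :
    τ '' (span K X) = span K (τ '' X) := by
  ext y
  constructor
  · rintro ⟨x, hx, rfl⟩
    exact map_mem_span_image hσ τ.toLinearMap hx
  · intro hy
    refine ⟨τ.symm y, ?_, τ.apply_symm_apply y⟩
    have := map_mem_span_image hσ' τ.symm.toLinearMap hy
    simpa [Set.image_image] using this

theorem exists_semilinearEquiv_apply_basis (σ σ' : L →+* L) [RingHomInvPair σ σ']
    [RingHomInvPair σ' σ] {ι : Type*} (b : Basis ι L E) (g : Basis ι L E') :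
    ∃ τ : E ≃ₛₗ[σ] E', ∀ i, τ (b i) = g i := by
  let e : L ≃ₛₗ[σ] L :=
    { σ.toSemilinearMap with
      invFun := σ'
      left_inv := fun _ => RingHomInvPair.comp_apply_eq
      right_inv := fun _ => RingHomInvPair.comp_apply_eq₂ }
  refine ⟨(b.repr.trans (Finsupp.mapRange.linearEquiv e)).trans g.repr.symm, fun i => ?_⟩
  have he : e 1 = 1 := map_one σ
  simp [he]

theorem exists_semilinearEquiv_image_eq
    (hσ : ∀ k : K, σ (algebraMap K L k) ∈ (algebraMap K L).range)
    (hσ' : ∀ k : K, σ' (algebraMap K L k) ∈ (algebraMap K L).range)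
    {b : Basis (Fin (m + 1)) L E} {b' : Basis (Fin (m + 1)) L E'} {c c' : Fin m → L}
    (h : IsLineFrame V U b c) (h' : IsLineFrame V' U' b' c') {α : L} (hα : α ≠ 0)
    (hZ : ∀ z, z ∈ span K (Set.range c) ↔ α * σ z ∈ span K (Set.range c')) :
    ∃ τ : E ≃ₛₗ[σ] E', τ '' (V : Set E) = V' ∧ τ '' (U : Set E) = U' := by
  let f : L →ₛₗ[σ] L := α • σ.toSemilinearMap
  have hcf (j) : c' j ∈ span K (Set.range (f ∘ c)) := by
    have hj : f (σ' (α⁻¹ * c' j)) = c' j := by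
      change α * σ (σ' (α⁻¹ * c' j)) = c' j
      rw [RingHomInvPair.comp_apply_eq₂, mul_inv_cancel_left₀ hα]
    have hmem : σ' (α⁻¹ * c' j) ∈ span K (Set.range c) :=
      (hZ _).2 (by change f _ ∈ _; rw [hj]; exact subset_span ⟨j, rfl⟩)
    rw [Set.range_comp, ← hj]
    exact map_mem_span_image hσ f hmem
  obtain ⟨g, hg⟩ := h'.exists_basis_of_forall_mem_span hcf
  obtain ⟨τ, hτ⟩ := exists_semilinearEquiv_apply_basis σ σ' b g
  have hτb : τ ∘ b = g := funext hτ
  have hline : α • τ (lineVector b c) = lineVector g (f ∘ c) := by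
    simp only [lineVector, map_sum, map_smulₛₗ, hτ, Finset.smul_sum, smul_smul]
    rfl
  refine ⟨τ, ?_, ?_⟩
  · rw [← h.span_range, image_span_eq hσ hσ', ← Set.range_comp, hτb, hg.span_range]
  · have hpair : span L {g 0, τ (lineVector b c)} = U' := by
      rw [← hg.span_pair, ← hline, span_insert, span_insert,
        span_singleton_smul_eq (IsUnit.mk0 α hα)]
    rw [← hpair, ← h.span_pair, ← hτ 0, ← Set.image_pair]
    exact congrArg SetLike.coe (Submodule.map_span (τ : E →ₛₗ[σ] E') _)

end Collineations

section Equivalence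

variable {K L E E' : Type*} [Field K] [Field L] [Algebra K L]
  [AddCommGroup E] [Module L E] [Module K E] [IsScalarTower K L E]
  [AddCommGroup E'] [Module L E'] [Module K E'] [IsScalarTower K L E']
  {m : ℕ} {V : Submodule K E} {V' : Submodule K E'} {U : Submodule L E} {U' : Submodule L E'}
  {b : Basis (Fin (m + 1)) L E} {b' : Basis (Fin (m + 1)) L E'} {c c' : Fin m → L}
  {σ σ' : L →+* L} [RingHomInvPair σ σ'] [RingHomInvPair σ' σ] {θ : U ≃ₛₗ[σ] U'}

theorem exists_mul_mem_iff_of_pointImage_splash_eq (h : IsLineFrame V U b c)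
    (h' : IsLineFrame V' U' b' c') (hm : 0 < m)
    (hθ : pointImage (fun x : U => (x : E)) (fun x : U => (θ x : E')) (Splash K L V U (m + 1)) =
      Splash K L V' U' (m + 1)) :
    ∃ α : L, α ≠ 0 ∧ ∀ z, z ∈ span K (Set.range c) ↔ α * σ z ∈ span K (Set.range c') := by
  let v : U := ⟨b 0, h.span_pair ▸ subset_span (.inl rfl)⟩
  let u : U := ⟨lineVector b c, h.span_pair ▸ subset_span (.inr rfl)⟩
  let v' : U' := ⟨b' 0, h'.span_pair ▸ subset_span (.inl rfl)⟩
  let u' : U' := ⟨lineVector b' c', h'.span_pair ▸ subset_span (.inr rfl)⟩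
  have hvu : LinearIndependent L ![v, u] := LinearIndependent.pair_iff.2 fun x y hxy =>
    LinearIndependent.pair_iff.1 (h.linearIndependent_pair hm) x y (congrArg Subtype.val hxy)
  have hvu' : LinearIndependent L ![v', u'] := LinearIndependent.pair_iff.2 fun x y hxy =>
    LinearIndependent.pair_iff.1 (h'.linearIndependent_pair hm) x y (congrArg Subtype.val hxy)
  refine exists_mul_mem_iff_of_affineCone (θ := θ) (Z := (span K (Set.range c)).toAddSubgroup)
    (Z' := (span K (Set.range c')).toAddSubgroup) hvu hvu' (fun w => ?_)
    ⟨c ⟨0, hm⟩, subset_span ⟨_, rfl⟩, h.linearIndependent.ne_zero _⟩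
  rcases eq_or_ne w 0 with rfl | hw
  · rw [map_zero]
    exact iff_of_true (zero_mem_affineCone _ _ _) (zero_mem_affineCone _ _ _)
  rw [← map_mem_affineCone_iff U.injective_subtype, ← map_mem_affineCone_iff U'.injective_subtype]
  have hw0 : (w : E) ≠ 0 := by simpa using hw
  have hθw0 : (θ w : E') ≠ 0 := by simpa using hw
  have hsplash := span_mem_iff_of_pointImage_eq (ι := U.subtype)
    (f := U'.subtype.comp θ.toLinearMap) (U'.injective_subtype.comp θ.injective) hθ hw0
  exact (h.span_singleton_mem_splash_iff hm w.2 hw0).symm.trans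
    (hsplash.trans (h'.span_singleton_mem_splash_iff hm (θ w).2 hθw0))

end Equivalence

theorem splash_equivalence_semilinear_general
    (K L : Type*) {E E' : Type*} [Field K] [Field L] [Algebra K L]
    [AddCommGroup E] [Module L E] [Module K E] [IsScalarTower K L E]
    [AddCommGroup E'] [Module L E'] [Module K E'] [IsScalarTower K L E']
    (σ : L ≃+* L) (hσ : ∀ k : K, σ (algebraMap K L k) ∈ (algebraMap K L).range)
    (hσ' : ∀ k : K, σ.symm (algebraMap K L k) ∈ (algebraMap K L).range)
    (r : ℕ) (hr : 2 ≤ r) (hE : finrank L E = r) (hE' : finrank L E' = r)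
    (V : Submodule K E) (hV : finrank K V = r) (hVspan : span L (V : Set E) = ⊤)
    (V' : Submodule K E') (hV' : finrank K V' = r) (hVspan' : span L (V' : Set E') = ⊤)
    (U : Submodule L E) (hU : finrank L U = 2) (hmeet : ∃ P, P ∈ BSet L (V : Set E) ∧ P ≤ U)
    (U' : Submodule L E') (hU' : finrank L U' = 2)
    (hmeet' : ∃ P, P ∈ BSet L (V' : Set E') ∧ P ≤ U')
    (hext : ∀ H ≤ V, finrank K H = r - 1 → ¬ U ≤ span L (H : Set E))
    (hext' : ∀ H ≤ V', finrank K H = r - 1 → ¬ U' ≤ span L (H : Set E')) :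
    ((∃ θ : U ≃ U',
        (∀ x y, θ (x + y) = θ x + θ y) ∧ (∀ (c : L) x, θ (c • x) = σ c • θ x) ∧
        pointImage (fun x : U => (x : E)) (fun x : U => (θ x : E')) (Splash K L V U r) =
          Splash K L V' U' r) →
      ∃ τ : E ≃ E',
        (∀ x y, τ (x + y) = τ x + τ y) ∧ (∀ (c : L) x, τ (c • x) = σ c • τ x) ∧
        τ '' U = U' ∧ pointImage id τ (BSet L (V : Set E)) = BSet L (V' : Set E')) ∧
    ∀ τ : E ≃ E',
      (∀ x y, τ (x + y) = τ x + τ y) → (∀ (c : L) x, τ (c • x) = σ c • τ x) →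
      τ '' U = U' → pointImage id τ (BSet L (V : Set E)) = BSet L (V' : Set E') →
      pointImage id τ (Splash K L V U r) = Splash K L V' U' r := by
  obtain ⟨m, rfl⟩ := Nat.exists_eq_add_of_le' (one_le_two.trans hr)
  have hm : 0 < m := by omega
  have := RingHomInvPair.of_ringEquiv σ
  have := RingHomInvPair.symm (σ : L →+* L) (σ.symm : L →+* L)
  constructor
  · rintro ⟨θ, hadd, hsmul, hθ⟩
    let θ' : U ≃ₛₗ[(σ : L →+* L)] U' := { θ with map_add' := hadd, map_smul' := hsmul }
    obtain ⟨b, c, hbc⟩ := exists_isLineFrame hE hV hVspan hU hmeet hext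
    obtain ⟨b', c', hbc'⟩ := exists_isLineFrame hE' hV' hVspan' hU' hmeet' hext'
    obtain ⟨α, hα, hZ⟩ := exists_mul_mem_iff_of_pointImage_splash_eq (θ := θ') hbc hbc' hm hθ
    obtain ⟨τ, hτV, hτU⟩ := exists_semilinearEquiv_image_eq hσ hσ' hbc hbc' hα hZ
    exact ⟨τ.toEquiv, τ.map_add, τ.map_smulₛₗ, hτU, by rw [← hτV]; exact pointImage_id_bSet τ _⟩
  · intro τ hadd hsmul hτU hτV
    let τ' : E ≃ₛₗ[(σ : L →+* L)] E' := { τ with map_add' := hadd, map_smul' := hsmul }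
    exact pointImage_id_splash (τ := τ') hV hV' hτU hτV

/-- (a) a semilinear collineation of the line carrying one splash onto
the other extends to a semilinear collineation of the whole space fixing the line and
carrying one subgeometry onto the other; (b) conversely, such a collineation of the
space carries the first splash onto the second. -/
theorem splash_equivalence_semilinear
    (K L : Type*) [Field K] [Field L] [Algebra K L] [Fintype K] [Fintype L]
    (r n : ℕ) (hr : 3 ≤ r) (hrn : r ≤ n) (hrank : Module.finrank K L = n)
    (V₀ V₁ : Submodule K (Fin r → L))
    (hV₀rank : Module.finrank K V₀ = r)
    (hV₀span : Submodule.span L (V₀ : Set (Fin r → L)) = ⊤)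
    (hV₁rank : Module.finrank K V₁ = r)
    (hV₁span : Submodule.span L (V₁ : Set (Fin r → L)) = ⊤)
    (U : Submodule L (Fin r → L)) (hU : Module.finrank L U = 2)
    (htangent₀ : ∃! P, P ∈ BSet L (V₀ : Set (Fin r → L)) ∧ P ≤ U)
    (htangent₁ : ∃! P, P ∈ BSet L (V₁ : Set (Fin r → L)) ∧ P ≤ U)
    (hext₀ : ∀ H : Submodule K (Fin r → L), H ≤ V₀ → Module.finrank K H = r - 1 →
      ¬ U ≤ Submodule.span L (H : Set (Fin r → L)))
    (hext₁ : ∀ H : Submodule K (Fin r → L), H ≤ V₁ → Module.finrank K H = r - 1 →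
      ¬ U ≤ Submodule.span L (H : Set (Fin r → L))) :
    -- (a)
    ((∃ (σ : L ≃+* L) (θ : U ≃ U),
        (∀ x y : U, θ (x + y) = θ x + θ y) ∧
        (∀ (c : L) (x : U), θ (c • x) = σ c • θ x) ∧
        {Q | ∃ x : U, (x : Fin r → L) ≠ 0 ∧
            Submodule.span L {(x : Fin r → L)} ∈ Splash K L V₀ U r ∧
            Q = Submodule.span L {(θ x : Fin r → L)}} = Splash K L V₁ U r) →
      ∃ (σ' : L ≃+* L) (τ : (Fin r → L) ≃ (Fin r → L)),
        (∀ x y : Fin r → L, τ (x + y) = τ x + τ y) ∧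
        (∀ (c : L) (x : Fin r → L), τ (c • x) = σ' c • τ x) ∧
        (fun x => τ x) '' (U : Set (Fin r → L)) = (U : Set (Fin r → L)) ∧
        {Q | ∃ v : Fin r → L, v ≠ 0 ∧
            Submodule.span L {v} ∈ BSet L (V₀ : Set (Fin r → L)) ∧
            Q = Submodule.span L {τ v}} = BSet L (V₁ : Set (Fin r → L))) ∧
    -- (b)
    (∀ (σ' : L ≃+* L) (τ : (Fin r → L) ≃ (Fin r → L)),
      (∀ x y : Fin r → L, τ (x + y) = τ x + τ y) →
      (∀ (c : L) (x : Fin r → L), τ (c • x) = σ' c • τ x) →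
      (fun x => τ x) '' (U : Set (Fin r → L)) = (U : Set (Fin r → L)) →
      {Q | ∃ v : Fin r → L, v ≠ 0 ∧
          Submodule.span L {v} ∈ BSet L (V₀ : Set (Fin r → L)) ∧
          Q = Submodule.span L {τ v}} = BSet L (V₁ : Set (Fin r → L)) →
      {Q | ∃ v : Fin r → L, v ≠ 0 ∧
          Submodule.span L {v} ∈ Splash K L V₀ U r ∧
          Q = Submodule.span L {τ v}} = Splash K L V₁ U r) := by
  have h := fun σ : L ≃+* L => splash_equivalence_semilinear_general K L σ
    (ringHom_algebraMap_mem_range (σ : L →+* L)) (ringHom_algebraMap_mem_range (σ.symm : L →+* L))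
    r (by omega) (finrank_fin_fun L) (finrank_fin_fun L) V₀ hV₀rank hV₀span V₁ hV₁rank hV₁span
    U hU htangent₀.exists U hU htangent₁.exists hext₀ hext₁
  exact ⟨fun ⟨σ, θ, hθ⟩ => ⟨σ, (h σ).1 ⟨θ, hθ⟩⟩, fun σ => (h σ).2⟩
end

section
/- Let 3 ≤ r ≤ n. Let π₀ = B(V₀) and π₁ = B(V₁) be q-subgeometries of PG(r-1,q^n), both tangent to the line l_∞ = PG(U), with l_∞ not contained in the extension of any hyperplane of π₀ or of π₁. (a) If there exists an L-linear bijection θ : U → U whose induced map on points carries S(π₀,l_∞) onto S(π₁,l_∞), then there exists an L-linear bijection τ : L^r → L^r with τ(U) = U whose induced map on points carries π₀ onto π₁, i.e. { L·τ(v) : L·v ∈ π₀ } = π₁. (b) Conversely, if there exists an L-linear bijection τ : L^r → L^r with τ(U) = U and { L·τ(v) : L·v ∈ π₀ } = π₁, then { L·τ(v) : L·v ∈ S(π₀,l_∞) } = S(π₁,l_∞). -/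
open Submodule Module

/-!
The forms in the dual `V*` extend `L`-linearly to `W`, and the points of the splash on `U` are
those killed by a nonzero form in `D`, the image of the restriction map `V* → U*`. This map is
injective because `U` lies in no extended hyperplane. Hence a linear bijection of `U` whose
transpose matches two such spaces `D` induces an isomorphism of the duals `V*`, and dualizing
extends it to `W` so as to match the two spaces `V`.

Since `U` is tangent to the subgeometry at a point `e`, in suitable coordinates `D` consists of
the forms with first coordinate in `K` and second coordinate in a subspace `A` of `L`, and the
splash is `A ∪ {∞}`. A projectivity carrying one splash to another gives a Möbius map from
`A ∪ {∞}` to `A' ∪ {∞}`. By translations, which preserve `A` and `A'`, it reduces to `x ↦ k / x`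
unless it is affine, and Hua's identity then yields `A' = c A` for some `c ≠ 0`. The
corresponding diagonal map of `U`, which may differ from the given projectivity, matches the two
spaces `D`.
-/

section AddSubgroup

/-- Hua's identity. -/
theorem inv_inv_add_inv_sub_inv {D : Type*} [DivisionRing D] {a b : D} (ha : a ≠ 0) (hb : b ≠ 0)
    (hab : b⁻¹ - a ≠ 0) : (a⁻¹ + (b⁻¹ - a)⁻¹)⁻¹ = a - a * b * a := by
  rw [inv_add_inv' ha hab, add_sub_cancel, mul_inv_rev, mul_inv_rev, inv_inv, inv_inv, inv_inv,
    sub_mul, inv_mul_cancel_left₀ hb, mul_assoc]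

theorem mul_mul_mem_of_mem_iff_inv_mem {D : Type*} [DivisionRing D] {A B : AddSubgroup D}
    (hAB : ∀ x, x ∈ B ↔ x⁻¹ ∈ A) {a b : D} (ha : a ∈ A) (hb : b ∈ B) : a * b * a ∈ A := by
  rcases eq_or_ne a 0 with rfl | ha0
  · simp
  rcases eq_or_ne b 0 with rfl | hb0
  · simp
  rcases eq_or_ne (b⁻¹ - a) 0 with hd | hd
  · obtain rfl := sub_eq_zero.1 hd
    simpa [hb0] using ha
  have ha' : a⁻¹ ∈ B := by rwa [hAB, inv_inv]
  have hd' : (b⁻¹ - a)⁻¹ ∈ B := by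
    rw [hAB, inv_inv]
    exact A.sub_mem ((hAB b).1 hb) ha
  have hsub : a - a * b * a ∈ A :=
    inv_inv_add_inv_sub_inv ha0 hb0 hd ▸ (hAB _).1 (B.add_mem ha' hd')
  simpa using A.sub_mem ha hsub

variable {L : Type*} [Field L] {A A' : AddSubgroup L}

theorem exists_mul_mem_iff_of_div {k : L} (hk : k ≠ 0) (h : ∀ x, x ∈ A ↔ k / x ∈ A') :
    ∃ c : L, c ≠ 0 ∧ ∀ x, x ∈ A ↔ c * x ∈ A' := by
  by_cases hA : ∃ a ∈ A, a ≠ 0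
  · obtain ⟨a, ha, ha0⟩ := hA
    let B : AddSubgroup L := A'.comap (AddMonoidHom.mulLeft k)
    have hBA : ∀ x, x ∈ B ↔ x⁻¹ ∈ A := fun x => by
      rw [h, div_inv_eq_mul]
      rfl
    have hAB : ∀ x, x ∈ A ↔ x⁻¹ ∈ B := fun x => by rw [hBA, inv_inv]
    have hmem : ∀ x, k * a⁻¹ ^ 2 * x ∈ A' ↔ a⁻¹ * x * a⁻¹ ∈ B := fun x => by
      rw [show k * a⁻¹ ^ 2 * x = k * (a⁻¹ * x * a⁻¹) by ring]
      rfl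
    -- `x ↦ a⁻¹ * x * a⁻¹` and `y ↦ a * y * a` are mutually inverse bijections of `A` and `B`.
    refine ⟨k * a⁻¹ ^ 2, by positivity, fun x => ?_⟩
    rw [hmem]
    refine ⟨mul_mul_mem_of_mem_iff_inv_mem hAB ((hAB a).1 ha), fun hx => ?_⟩
    have hx' := mul_mul_mem_of_mem_iff_inv_mem hBA ha hx
    rwa [show a * (a⁻¹ * x * a⁻¹) * a = x by field_simp] at hx'
  · push Not at hA
    refine ⟨k, hk, fun x => ⟨fun hx => by simp [hA x hx], fun hx => ?_⟩⟩
    have hx0 : x = 0 := inv_eq_zero.1 (hA x⁻¹ ((h _).2 (by rwa [div_inv_eq_mul])))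
    exact hx0 ▸ A.zero_mem

/-- As `x / 0 = 0`, the hypothesis `h` says that the Möbius map carries `A ∪ {∞}` onto
`A' ∪ {∞}`. -/
theorem exists_mul_mem_iff_of_mobius {α β γ δ : L} (hdet : α * δ - β * γ ≠ 0)
    (h : ∀ s t : L, s / t ∈ A ↔ (α * s + β * t) / (γ * s + δ * t) ∈ A') :
    ∃ c : L, c ≠ 0 ∧ ∀ x, x ∈ A ↔ c * x ∈ A' := by
  rcases eq_or_ne γ 0 with rfl | hγ
  · have hα : α ≠ 0 := by rintro rfl; simp at hdet
    have hδ : δ ≠ 0 := by rintro rfl; simp at hdet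
    have hβ : β / δ ∈ A' := by simpa using h 0 1
    refine ⟨α / δ, div_ne_zero hα hδ, fun x => ?_⟩
    have hx := h x 1
    rwa [div_one, show (α * x + β * 1) / (0 * x + δ * 1) = α / δ * x + β / δ by simp; ring,
      A'.add_mem_cancel_right hβ] at hx
  · have hα : α / γ ∈ A' := by simpa using h 1 0
    have hδ : δ / γ ∈ A := by
      have hpole := h (-(δ / γ)) 1
      rw [show γ * -(δ / γ) + δ * 1 = 0 by field_simp; ring] at hpole
      simpa using hpole
    have hk : (β * γ - α * δ) / γ ^ 2 ≠ 0 :=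
      div_ne_zero (fun h0 => hdet (by linear_combination -h0)) (pow_ne_zero 2 hγ)
    refine exists_mul_mem_iff_of_div hk fun x => ?_
    rcases eq_or_ne x 0 with rfl | hx0
    · simp
    have hx := h (x - δ / γ) 1
    have hpartial : (α * (x - δ / γ) + β * 1) / (γ * (x - δ / γ) + δ * 1)
        = (β * γ - α * δ) / γ ^ 2 / x + α / γ := by
      rw [show γ * (x - δ / γ) + δ * 1 = γ * x by field_simp; ring]
      field_simp
      ring
    rwa [div_one, hpartial, A'.add_mem_cancel_right hα, sub_eq_add_neg,
      A.add_mem_cancel_right (A.neg_mem hδ)] at hx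

theorem exists_mul_mem_iff_of_linearEquiv {E E' : Type*} [AddCommGroup E] [Module L E]
    [AddCommGroup E'] [Module L E'] (b : Basis (Fin 2) L E) (b' : Basis (Fin 2) L E')
    (θ : E ≃ₗ[L] E')
    (h : ∀ x ≠ 0, b.repr x 0 / b.repr x 1 ∈ A ↔ b'.repr (θ x) 0 / b'.repr (θ x) 1 ∈ A') :
    ∃ c : L, c ≠ 0 ∧ ∀ x, x ∈ A ↔ c * x ∈ A' := by
  let M := LinearMap.toMatrix b b' θ
  have hdet : M 0 0 * M 1 1 - M 0 1 * M 1 0 ≠ 0 := by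
    rw [← Matrix.det_fin_two]
    exact (θ.isUnit_det b b').ne_zero
  refine exists_mul_mem_iff_of_mobius hdet fun s t => ?_
  let x := s • b 0 + t • b 1
  have hx : b.repr x 0 = s ∧ b.repr x 1 = t := by simp [x]
  have hθx : ∀ i, b'.repr (θ x) i = M i 0 * s + M i 1 * t := fun i => by
    simp [x, M, LinearMap.toMatrix_apply, mul_comm]
  rcases eq_or_ne x 0 with hx0 | hx0
  · simp only [hx0, map_zero, Finsupp.coe_zero, Pi.zero_apply] at hx
    simp [← hx.1, ← hx.2, A.zero_mem, A'.zero_mem]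
  · simpa only [hx.1, hx.2, hθx] using h x hx0

end AddSubgroup

section Dual

variable {K L E E' : Type*} [Field K] [Field L] [Algebra K L]
  [AddCommGroup E] [Module L E] [AddCommGroup E'] [Module L E']

theorem finrank_add_one_eq_iff_exists_ker [Module K E] [FiniteDimensional K E]
    {H : Submodule K E} :
    finrank K H + 1 = finrank K E ↔ ∃ f : Dual K E, f ≠ 0 ∧ LinearMap.ker f = H := by
  constructor
  · intro hH
    have hlt : H < ⊤ := lt_top_iff_ne_top.2 fun h => by
      rw [h, finrank_top] at hH
      omega
    obtain ⟨f, hf, hle⟩ := H.exists_le_ker_of_lt_top hlt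
    have hker := Module.Dual.finrank_ker_add_one_of_ne_zero hf
    exact ⟨f, hf, (Submodule.eq_of_le_of_finrank_eq hle (by omega)).symm⟩
  · rintro ⟨f, hf, rfl⟩
    exact Module.Dual.finrank_ker_add_one_of_ne_zero hf

theorem exists_basis_of_dual_apply_eq_one (hE : finrank L E = 2) {φ : Dual L E} {e : E}
    (he : φ e = 1) : ∃ b : Basis (Fin 2) L E, b 0 = e ∧ φ (b 1) = 0 := by
  have : FiniteDimensional L E := Module.finite_of_finrank_pos (by omega)
  have hker : LinearMap.ker φ ≠ ⊥ := fun h => by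
    have := Module.Dual.finrank_ker_add_one_of_ne_zero (f := φ) fun h0 => by simp [h0] at he
    rw [h, finrank_bot] at this
    omega
  obtain ⟨u, hu, hu0⟩ := Submodule.exists_mem_ne_zero_of_ne_bot hker
  have hli : LinearIndependent L ![e, u] := by
    refine LinearIndependent.pair_iff.2 fun s t hst => ?_
    have hs : s = 0 := by simpa [he, LinearMap.mem_ker.1 hu] using congrArg φ hst
    exact ⟨hs, by simpa [hs, hu0] using hst⟩
  exact ⟨basisOfLinearIndependentOfCardEqFinrank hli (by simp [hE]), by simp,
    by simpa using hu⟩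

/-- The forms taking a value in `K` at `b 0` and a value in `A` at `b 1`. In the language of
linear sets, the points of the dual line they span form a club, whose head is the point of the
forms vanishing at `b 0`. -/
noncomputable def clubForms (b : Basis (Fin 2) L E) (A : Submodule K L) : Submodule K (Dual L E) :=
  (1 : Submodule K L).comap ((Dual.eval L E (b 0)).restrictScalars K) ⊓
    A.comap ((Dual.eval L E (b 1)).restrictScalars K)

variable {b : Basis (Fin 2) L E} {b' : Basis (Fin 2) L E'} {A A' : Submodule K L}

theorem mem_clubForms {φ : Dual L E} :
    φ ∈ clubForms b A ↔ (∃ k : K, algebraMap K L k = φ (b 0)) ∧ φ (b 1) ∈ A :=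
  and_congr_left' Submodule.mem_one

theorem exists_mem_clubForms_apply_eq_zero_iff (hA : A ≠ ⊥) (x : E) :
    (∃ φ ∈ clubForms b A, φ ≠ 0 ∧ φ x = 0) ↔ b.repr x 0 / b.repr x 1 ∈ A := by
  have happly : ∀ φ : Dual L E, φ x = b.repr x 0 * φ (b 0) + b.repr x 1 * φ (b 1) := fun φ => by
    conv_lhs => rw [← b.sum_repr x, Fin.sum_univ_two]
    simp only [map_add, map_smul, smul_eq_mul]
  generalize b.repr x 0 = s, b.repr x 1 = t at happly
  rcases eq_or_ne t 0 with rfl | ht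
  · obtain ⟨a, ha, ha0⟩ := Submodule.exists_mem_ne_zero_of_ne_bot hA
    refine iff_of_true ⟨b.constr L ![0, a], mem_clubForms.2 ⟨⟨0, by simp⟩, by simpa⟩, ?_, ?_⟩
      (by simp)
    · exact fun h => ha0 (by simpa using LinearMap.congr_fun h (b 1))
    · simp [happly]
  constructor
  · rintro ⟨φ, hφ, hφ0, hφx⟩
    obtain ⟨⟨k, hk⟩, hφA⟩ := mem_clubForms.1 hφ
    rw [happly, ← hk] at hφx
    have hk0 : algebraMap K L k ≠ 0 := fun h0 => hφ0 <| b.ext fun i => by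
      fin_cases i
      · simpa [hk] using h0
      · simpa [h0, ht] using hφx
    have hst : s / t = -k⁻¹ • φ (b 1) := by
      rw [Algebra.smul_def, map_neg, map_inv₀]
      field_simp
      linear_combination hφx
    exact hst ▸ A.smul_mem _ hφA
  · intro hst
    refine ⟨b.constr L ![-1, s / t], mem_clubForms.2 ⟨⟨-1, by simp⟩, by simpa⟩, ?_, ?_⟩
    · exact fun h => by simpa using LinearMap.congr_fun h (b 0)
    · rw [happly]
      simp [mul_div_cancel₀ _ ht]

theorem exists_map_dualMap_clubForms_eq {c : L} (hc : c ≠ 0) (h : ∀ x, x ∈ A ↔ c * x ∈ A') :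
    ∃ g : E ≃ₗ[L] E', (clubForms b' A').map (g.dualMap.restrictScalars K).toLinearMap
      = clubForms b A := by
  let g : E ≃ₗ[L] E' :=
    b.equiv (b'.unitsSMul ![1, (Units.mk0 c hc)⁻¹]) (Equiv.refl _)
  have hg0 : g (b 0) = b' 0 := by simp [g, Basis.unitsSMul_apply]
  have hg1 : g (b 1) = c⁻¹ • b' 1 := by simp [g, Basis.unitsSMul_apply, Units.smul_def]
  refine ⟨g, ?_⟩
  ext φ
  refine (Submodule.mem_map_equiv _).trans ?_
  obtain ⟨ψ, rfl⟩ := g.dualMap.surjective φ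
  simp [mem_clubForms, hg0, hg1, h, mul_inv_cancel_left₀ hc]

theorem exists_map_dualMap_clubForms_eq_of_linearEquiv (hA : A ≠ ⊥) (hA' : A' ≠ ⊥)
    (θ : E ≃ₗ[L] E')
    (hθ : ∀ x ≠ 0, (∃ φ ∈ clubForms b A, φ ≠ 0 ∧ φ x = 0) ↔
      ∃ φ ∈ clubForms b' A', φ ≠ 0 ∧ φ (θ x) = 0) :
    ∃ g : E ≃ₗ[L] E', (clubForms b' A').map (g.dualMap.restrictScalars K).toLinearMap
      = clubForms b A := by
  simp only [exists_mem_clubForms_apply_eq_zero_iff hA,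
    exists_mem_clubForms_apply_eq_zero_iff hA'] at hθ
  obtain ⟨c, hc, hcA⟩ := exists_mul_mem_iff_of_linearEquiv (A := A.toAddSubgroup)
    (A' := A'.toAddSubgroup) b b' θ hθ
  exact exists_map_dualMap_clubForms_eq hc hcA

end Dual

section BaseChange

variable {K L M W : Type*} [Field K] [Field L] [Algebra K L] [AddCommGroup M] [Module K M]
  [AddCommGroup W] [Module L W] [Module K W] [IsScalarTower K L W] {j : M →ₗ[K] W}

theorem isBaseChange_of_span_range_eq_top [FiniteDimensional K M]
    (hrank : finrank K M = finrank L W) (hspan : span L (Set.range j) = ⊤) :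
    IsBaseChange L j := by
  let b := finBasis K M
  have hb : span L (Set.range fun i => j (b i)) = ⊤ := by
    rw [← hspan, ← LinearMap.coe_range, LinearMap.range_eq_map, ← b.span_eq, Submodule.map_span,
      Submodule.span_span_of_tower, ← Set.range_comp]
    rfl
  let c : Basis _ L W := basisOfTopLeSpanOfCardEqFinrank _ hb.ge (by simpa using hrank)
  have hj : j = Finsupp.linearCombination K c ∘ₗ b.repr := b.ext fun i => by simp [c]
  exact hj ▸ IsBaseChange.comp_equiv b.repr _ (IsBaseChange.of_basis K c)

theorem forall_toDual_apply_eq_zero_iff (h : IsBaseChange L j) {x : W} :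
    (∀ f : Dual K M, h.toDual f x = 0) ↔ x = 0 := by
  refine ⟨fun hx => ?_, fun hx f => by rw [hx, map_zero]⟩
  let b := Basis.ofVectorSpace K M
  have hcoord : ∀ i, (h.basis b).coord i = h.toDual (b.coord i) := fun i =>
    h.algHom_ext _ _ fun v => by
      simp [h.toDual_comp_apply, IsBaseChange.basis_repr_comp_apply]
  exact (h.basis b).forall_coord_eq_zero_iff.1 fun i => hcoord i ▸ hx (b.coord i)

theorem span_map_ker_eq_ker_toDual (h : IsBaseChange L j) {f : Dual K M} (hf : f ≠ 0) :
    span L ((LinearMap.ker f).map j : Set W) = LinearMap.ker (h.toDual f) := by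
  apply le_antisymm
  · rw [span_le]
    rintro _ ⟨v, hv, rfl⟩
    simp [h.toDual_comp_apply, LinearMap.mem_ker.1 hv]
  obtain ⟨e, he⟩ : ∃ e, f e = 1 := LinearMap.surjective hf 1
  have hsub : ∀ x : W, x - h.toDual f x • j e ∈ span L ((LinearMap.ker f).map j : Set W) := by
    intro x
    induction x using h.inductionOn with
    | zero => simp
    | tmul v =>
      refine subset_span ⟨v - f v • e, by simp [he], ?_⟩
      rw [map_sub, map_smul, h.toDual_comp_apply, algebraMap_smul]
    | smul l x hx => simpa [smul_sub, mul_smul] using smul_mem _ l hx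
    | add x y hx hy => simpa [add_smul, add_sub_add_comm] using add_mem hx hy
  intro x hx
  simpa [LinearMap.mem_ker.1 hx] using hsub x

variable {M' W' : Type*} [AddCommGroup M'] [Module K M'] [AddCommGroup W'] [Module L W']
  [Module K W'] [IsScalarTower K L W'] {j' : M' →ₗ[K] W'}

theorem exists_linearEquiv_of_dual [FiniteDimensional K M] [FiniteDimensional K M']
    (h : IsBaseChange L j) (h' : IsBaseChange L j') (κ : Dual K M' ≃ₗ[K] Dual K M) :
    ∃ (σ : M ≃ₗ[K] M') (τ : W ≃ₗ[L] W'), (∀ v, τ (j v) = j' (σ v)) ∧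
      ∀ f x, h'.toDual f (τ x) = h.toDual (κ f) x := by
  let σ : M ≃ₗ[K] M' := (evalEquiv K M).trans (κ.dualMap.trans (evalEquiv K M').symm)
  let τ : W ≃ₗ[L] W' := h.equiv.symm.trans ((σ.baseChange K L M M').trans h'.equiv)
  have hτ : ∀ v, τ (j v) = j' (σ v) := fun v => by simp [τ]
  refine ⟨σ, τ, hτ, fun f => LinearMap.congr_fun (f := h'.toDual f ∘ₗ τ.toLinearMap) ?_⟩
  refine h.algHom_ext _ _ fun v => ?_
  rw [LinearMap.comp_apply, LinearEquiv.coe_coe, hτ, h.toDual_comp_apply, h'.toDual_comp_apply]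
  simp [σ]

end BaseChange

section Splash

variable {K L W W' : Type*} [Field K] [Field L] [Algebra K L]
  [AddCommGroup W] [Module L W] [AddCommGroup W'] [Module L W']

theorem map_image_bSet (τ : W ≃ₗ[L] W') (X : Set W) :
    Submodule.map τ.toLinearMap '' BSet L X = BSet L (τ '' X) := by
  ext P
  constructor
  · rintro ⟨_, ⟨x, hx, hx0, rfl⟩, rfl⟩
    exact ⟨τ x, ⟨x, hx, rfl⟩, by simpa using hx0, by simp [Submodule.map_span]⟩
  · rintro ⟨_, ⟨x, hx, rfl⟩, hx0, rfl⟩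
    exact ⟨span L {x}, ⟨x, hx, by simpa using hx0, rfl⟩, by simp [Submodule.map_span]⟩

variable [Module K W] [IsScalarTower K L W] [Module K W'] [IsScalarTower K L W']
  {V : Submodule K W} {U : Submodule L W} {V' : Submodule K W'} {U' : Submodule L W'} {r : ℕ}

theorem le_and_finrank_eq_sub_one_iff {H : Submodule K W} (hr : 0 < r) (hV : finrank K V = r) :
    H ≤ V ∧ finrank K H = r - 1 ↔
      ∃ f : Dual K V, f ≠ 0 ∧ (LinearMap.ker f).map V.subtype = H := by
  have : FiniteDimensional K V := Module.finite_of_finrank_pos (hV ▸ hr)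
  have hiff : ∀ p : Submodule K V, finrank K (p.map V.subtype) = r - 1 ↔
      ∃ f : Dual K V, f ≠ 0 ∧ LinearMap.ker f = p := fun p => by
    rw [Submodule.finrank_map_subtype_eq, ← finrank_add_one_eq_iff_exists_ker]
    omega
  constructor
  · rintro ⟨hHV, hH⟩
    obtain ⟨p, rfl⟩ : ∃ p, p.map V.subtype = H :=
      ⟨H.comap V.subtype, Submodule.map_comap_eq_self (by simpa using hHV)⟩
    obtain ⟨f, hf, rfl⟩ := (hiff p).1 hH
    exact ⟨f, hf, rfl⟩
  · rintro ⟨f, hf, rfl⟩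
    exact ⟨Submodule.map_subtype_le _ _, (hiff _).2 ⟨f, hf, rfl⟩⟩

theorem exists_hyperplane_span_iff (h : IsBaseChange L V.subtype) (hr : 0 < r)
    (hV : finrank K V = r) {p : Submodule L W → Prop} :
    (∃ H ≤ V, finrank K H = r - 1 ∧ p (span L (H : Set W))) ↔
      ∃ f : Dual K V, f ≠ 0 ∧ p (LinearMap.ker (h.toDual f)) := by
  simp only [← and_assoc, le_and_finrank_eq_sub_one_iff hr hV]
  constructor
  · rintro ⟨_, ⟨f, hf, rfl⟩, hp⟩
    exact ⟨f, hf, span_map_ker_eq_ker_toDual h hf ▸ hp⟩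
  · rintro ⟨f, hf, hp⟩
    exact ⟨_, ⟨f, hf, rfl⟩, (span_map_ker_eq_ker_toDual h hf).symm ▸ hp⟩

theorem mem_splash_iff (h : IsBaseChange L V.subtype) (hr : 0 < r) (hV : finrank K V = r)
    {P : Submodule L W} :
    P ∈ Splash K L V U r ↔ finrank L P = 1 ∧ P ≤ U ∧
      ∃ f : Dual K V, f ≠ 0 ∧ P ≤ LinearMap.ker (h.toDual f) :=
  and_congr_right' <| and_congr_right' <| exists_hyperplane_span_iff h hr hV

theorem exists_map_ker_toDual_le (h : IsBaseChange L V.subtype) (h' : IsBaseChange L V'.subtype)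
    (τ : W ≃ₗ[L] W')
    (hB : ∀ P ∈ BSet L (V : Set W), P.map τ.toLinearMap ∈ BSet L (V' : Set W'))
    {f : Dual K V} (hf : f ≠ 0) :
    ∃ f' : Dual K V', f' ≠ 0 ∧
      (LinearMap.ker (h.toDual f)).map τ.toLinearMap ≤ LinearMap.ker (h'.toDual f') := by
  have hrep : ∀ v : V, v ≠ 0 → ∃ y : V', span L {τ v} = span L {(y : W')} := fun v hv => by
    obtain ⟨y, hy, -, hvy⟩ := hB _ ⟨v, v.2, by simpa using hv, rfl⟩
    exact ⟨⟨y, hy⟩, by simpa [Submodule.map_span] using hvy⟩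
  let T : Submodule L W' := (LinearMap.ker (h.toDual f)).map τ.toLinearMap
  have hT : ∀ (v : V) (y : V'), span L {τ v} = span L {(y : W')} → ((y : W') ∈ T ↔ f v = 0) := by
    intro v y hvy
    have hfv : h.toDual f v = algebraMap K L (f v) := h.toDual_comp_apply f v
    rw [← Submodule.span_singleton_le_iff_mem, ← hvy, Submodule.span_singleton_le_iff_mem,
      Submodule.mem_map]
    simp [hfv]
  let T₀ : Submodule K V' := (T.restrictScalars K).comap V'.subtype
  have hT₀ : T₀ < ⊤ := lt_top_iff_ne_top.2 fun htop => by
    obtain ⟨v, hv⟩ : ∃ v, f v = 1 := LinearMap.surjective hf 1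
    obtain ⟨y, hvy⟩ := hrep v (by rintro rfl; simp at hv)
    have hy : y ∈ T₀ := htop ▸ Submodule.mem_top
    simp [(hT v y hvy).1 hy] at hv
  obtain ⟨f', hf', hle⟩ := T₀.exists_le_ker_of_lt_top hT₀
  refine ⟨f', hf', ?_⟩
  rw [Submodule.map_le_iff_le_comap, ← span_map_ker_eq_ker_toDual h hf, span_le]
  rintro _ ⟨v, hv, rfl⟩
  rcases eq_or_ne v 0 with rfl | hv0
  · simp
  obtain ⟨y, hvy⟩ := hrep v hv0
  have hfy : h'.toDual f' y = algebraMap K L (f' y) := h'.toDual_comp_apply f' y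
  have hy : (y : W') ∈ LinearMap.ker (h'.toDual f') := by
    rw [LinearMap.mem_ker, hfy, LinearMap.mem_ker.1 (hle ((hT v y hvy).2 hv)), map_zero]
  change τ v ∈ LinearMap.ker (h'.toDual f')
  rwa [← Submodule.span_singleton_le_iff_mem, hvy, Submodule.span_singleton_le_iff_mem]

theorem map_mem_splash (h : IsBaseChange L V.subtype) (h' : IsBaseChange L V'.subtype)
    (hr : 0 < r) (hV : finrank K V = r) (hV' : finrank K V' = r) (τ : W ≃ₗ[L] W')
    (hU : U.map τ.toLinearMap ≤ U')
    (hB : ∀ P ∈ BSet L (V : Set W), P.map τ.toLinearMap ∈ BSet L (V' : Set W'))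
    {P : Submodule L W} (hP : P ∈ Splash K L V U r) :
    P.map τ.toLinearMap ∈ Splash K L V' U' r := by
  obtain ⟨hP1, hPU, f, hf, hPf⟩ := (mem_splash_iff h hr hV).1 hP
  obtain ⟨f', hf', hff'⟩ := exists_map_ker_toDual_le h h' τ hB hf
  exact (mem_splash_iff h' hr hV').2 ⟨by rw [LinearEquiv.finrank_map_eq, hP1],
    (Submodule.map_mono hPU).trans hU, f', hf', (Submodule.map_mono hPf).trans hff'⟩

theorem map_image_splash_eq (h : IsBaseChange L V.subtype) (h' : IsBaseChange L V'.subtype)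
    (hr : 0 < r) (hV : finrank K V = r) (hV' : finrank K V' = r) (τ : W ≃ₗ[L] W')
    (hU : U.map τ.toLinearMap = U')
    (hB : Submodule.map τ.toLinearMap '' BSet L (V : Set W) = BSet L (V' : Set W')) :
    Submodule.map τ.toLinearMap '' Splash K L V U r = Splash K L V' U' r := by
  have hsymm : ∀ P : Submodule L W, (P.map τ.toLinearMap).map τ.symm.toLinearMap = P := fun P => by
    rw [← Submodule.map_comp, LinearEquiv.symm_comp, Submodule.map_id]
  have hsymm' : ∀ P : Submodule L W', (P.map τ.symm.toLinearMap).map τ.toLinearMap = P :=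
    fun P => by rw [← Submodule.map_comp, LinearEquiv.comp_symm, Submodule.map_id]
  apply Set.Subset.antisymm
  · rintro _ ⟨P, hP, rfl⟩
    exact map_mem_splash h h' hr hV hV' τ hU.le (fun Q hQ => hB ▸ ⟨Q, hQ, rfl⟩) hP
  · intro P hP
    refine ⟨_, map_mem_splash h' h hr hV' hV τ.symm (hU ▸ (hsymm U).le) ?_ hP, hsymm' P⟩
    rw [← hB]
    rintro _ ⟨Q, hQ, rfl⟩
    rwa [hsymm]

end Splash

section Restriction

variable {K L M M' W W' : Type*} [Field K] [Field L] [Algebra K L]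
  [AddCommGroup M] [Module K M] [AddCommGroup M'] [Module K M']
  [AddCommGroup W] [Module L W] [Module K W] [IsScalarTower K L W]
  [AddCommGroup W'] [Module L W'] [Module K W'] [IsScalarTower K L W']
  {j : M →ₗ[K] W} {j' : M' →ₗ[K] W'} {U : Submodule L W} {U' : Submodule L W'}

/-- The `K`-linear map sending a form on a `K`-structure `M` of `W` to the restriction to `U` of
its `L`-linear extension. -/
noncomputable def restrictDual (h : IsBaseChange L j) (U : Submodule L W) :
    Dual K M →ₗ[K] Dual L U :=
  U.dualRestrict.restrictScalars K ∘ₗ h.toDual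

theorem restrictDual_injective_iff (h : IsBaseChange L j) :
    Function.Injective (restrictDual h U) ↔
      ¬ ∃ f : Dual K M, f ≠ 0 ∧ U ≤ LinearMap.ker (h.toDual f) := by
  have hker : ∀ f, restrictDual h U f = 0 ↔ U ≤ LinearMap.ker (h.toDual f) := fun f =>
    ⟨fun hf u hu => LinearMap.congr_fun hf ⟨u, hu⟩, fun hf => LinearMap.ext fun u => hf u.2⟩
  rw [injective_iff_map_eq_zero]
  simp only [hker]
  push Not
  exact forall_congr' fun f => not_imp_not.symm

theorem exists_range_restrictDual_eq_clubForms (h : IsBaseChange L j) (hU : finrank L U = 2)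
    {e : M} (he : e ≠ 0) (heU : j e ∈ U) :
    ∃ (b : Basis (Fin 2) L U) (A : Submodule K L), A ≠ ⊥ ∧
      LinearMap.range (restrictDual h U) = clubForms b A := by
  have happly : ∀ f, restrictDual h U f ⟨j e, heU⟩ = algebraMap K L (f e) :=
    fun f => h.toDual_comp_apply f e
  obtain ⟨f₁, hf₁⟩ := Module.Projective.exists_dual_eq_one K he
  obtain ⟨b, hb0, hb1⟩ := exists_basis_of_dual_apply_eq_one hU (φ := restrictDual h U f₁)
    ((happly f₁).trans (by rw [hf₁, map_one]))
  let A : Submodule K L :=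
    LinearMap.range ((Dual.eval L U (b 1)).restrictScalars K ∘ₗ restrictDual h U)
  refine ⟨b, A, fun hA => b.ne_zero 1 ?_, le_antisymm ?_ fun φ hφ => ?_⟩
  · rw [← Subtype.coe_inj, ZeroMemClass.coe_zero, ← forall_toDual_apply_eq_zero_iff h]
    exact fun f => LinearMap.congr_fun (LinearMap.range_eq_bot.1 hA) f
  · rintro _ ⟨f, rfl⟩
    exact mem_clubForms.2 ⟨⟨f e, by rw [hb0, happly]⟩, f, rfl⟩
  · obtain ⟨⟨k, hk⟩, f, hf⟩ := mem_clubForms.1 hφ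
    refine ⟨f + (k - f e) • f₁, b.ext fun i => ?_⟩
    rw [map_add, map_smul, LinearMap.add_apply, LinearMap.smul_apply]
    rw [hb0] at hk
    fin_cases i
    · simp [hb0, happly, hf₁, ← hk, Algebra.smul_def]
    · simpa [hb1] using hf

theorem exists_linearEquiv_of_map_range_restrictDual_eq [FiniteDimensional K M]
    [FiniteDimensional K M'] (h : IsBaseChange L j) (h' : IsBaseChange L j')
    (hinj : Function.Injective (restrictDual h U)) (hinj' : Function.Injective (restrictDual h' U'))
    (g : U ≃ₗ[L] U') (hg : (LinearMap.range (restrictDual h' U')).map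
      (g.dualMap.restrictScalars K).toLinearMap = LinearMap.range (restrictDual h U)) :
    ∃ (σ : M ≃ₗ[K] M') (τ : W ≃ₗ[L] W'), (∀ v, τ (j v) = j' (σ v)) ∧ ∀ u : U, τ u = g u := by
  let κ : Dual K M' ≃ₗ[K] Dual K M := (LinearEquiv.ofInjective _ hinj').trans
    (((g.dualMap.restrictScalars K).ofSubmodules _ _ hg).trans
      (LinearEquiv.ofInjective _ hinj).symm)
  have hκ : ∀ f, restrictDual h U (κ f) = g.dualMap (restrictDual h' U' f) := fun f =>
    congrArg Subtype.val ((LinearEquiv.ofInjective _ hinj).apply_symm_apply _)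
  obtain ⟨σ, τ, hτ, hκτ⟩ := exists_linearEquiv_of_dual h h' κ
  refine ⟨σ, τ, hτ, fun u => sub_eq_zero.1 ((forall_toDual_apply_eq_zero_iff h').1 fun f => ?_)⟩
  rw [map_sub, hκτ, sub_eq_zero]
  exact LinearMap.congr_fun (hκ f) u

end Restriction

section Equivalence

variable {K L W W' : Type*} [Field K] [Field L] [Algebra K L]
  [AddCommGroup W] [Module L W] [Module K W] [IsScalarTower K L W]
  [AddCommGroup W'] [Module L W'] [Module K W'] [IsScalarTower K L W']
  {V : Submodule K W} {U : Submodule L W} {V' : Submodule K W'} {U' : Submodule L W'} {r : ℕ}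

theorem restrictDual_injective_iff_forall_not_le_span (h : IsBaseChange L V.subtype)
    (hr : 0 < r) (hV : finrank K V = r) :
    Function.Injective (restrictDual h U) ↔
      ∀ H : Submodule K W, H ≤ V → finrank K H = r - 1 → ¬ U ≤ span L (H : Set W) := by
  rw [restrictDual_injective_iff, ← exists_hyperplane_span_iff h hr hV (p := (U ≤ ·))]
  push Not
  rfl

theorem span_singleton_mem_splash_iff (h : IsBaseChange L V.subtype) (hr : 0 < r)
    (hV : finrank K V = r) (hinj : Function.Injective (restrictDual h U)) {x : U} (hx : x ≠ 0) :
    span L {(x : W)} ∈ Splash K L V U r ↔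
      ∃ φ ∈ LinearMap.range (restrictDual h U), φ ≠ 0 ∧ φ x = 0 := by
  have hx' : (x : W) ≠ 0 := by simpa using hx
  simp only [mem_splash_iff h hr hV, finrank_span_singleton hx', true_and,
    Submodule.span_singleton_le_iff_mem, x.2, LinearMap.mem_range, exists_exists_eq_and,
    map_ne_zero_iff _ hinj]
  rfl

theorem span_singleton_mem_iff_of_setOf_eq (θ : U ≃ₗ[L] U') {S : Set (Submodule L W)}
    {S' : Set (Submodule L W')}
    (hθ : {Q | ∃ x : U, (x : W) ≠ 0 ∧ span L {(x : W)} ∈ S ∧ Q = span L {(θ x : W')}} = S')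
    {x : U} (hx : x ≠ 0) : span L {(x : W)} ∈ S ↔ span L {(θ x : W')} ∈ S' := by
  rw [← hθ]
  refine ⟨fun h => ⟨x, by simpa using hx, h, rfl⟩, ?_⟩
  rintro ⟨y, -, hy, hxy⟩
  have hspan : span L {x} = span L {y} := by
    apply Submodule.map_injective_of_injective (f := U'.subtype ∘ₗ θ.toLinearMap)
      (U'.injective_subtype.comp θ.injective)
    simpa [Submodule.map_span] using hxy
  have hspan' := congrArg (Submodule.map U.subtype) hspan
  simp only [Submodule.map_span, Set.image_singleton, Submodule.subtype_apply] at hspan'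
  rwa [hspan']

theorem image_eq_of_forall_apply_eq {α β : Type*} {s : Set α} {t : Set β} {f : α → β} (e : s ≃ t)
    (h : ∀ x : s, f x = e x) : f '' s = t :=
  calc f '' s = Set.range (fun x : s => (e x : β)) := by simp only [Set.image_eq_range, h]
    _ = t := (e.surjective.range_comp Subtype.val).trans Subtype.range_coe

theorem exists_linearEquiv_of_splash_iff (h : IsBaseChange L V.subtype)
    (h' : IsBaseChange L V'.subtype) (hr : 0 < r) (hV : finrank K V = r) (hV' : finrank K V' = r)
    (hU : finrank L U = 2) (hU' : finrank L U' = 2)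
    (hP : ∃ P ∈ BSet L (V : Set W), P ≤ U) (hP' : ∃ P ∈ BSet L (V' : Set W'), P ≤ U')
    (hinj : Function.Injective (restrictDual h U)) (hinj' : Function.Injective (restrictDual h' U'))
    (θ : U ≃ₗ[L] U') (hθ : ∀ x : U, x ≠ 0 →
      (span L {(x : W)} ∈ Splash K L V U r ↔ span L {(θ x : W')} ∈ Splash K L V' U' r)) :
    ∃ τ : W ≃ₗ[L] W', U.map τ.toLinearMap = U' ∧
      Submodule.map τ.toLinearMap '' BSet L (V : Set W) = BSet L (V' : Set W') := by
  have : FiniteDimensional K V := Module.finite_of_finrank_pos (hV ▸ hr)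
  have : FiniteDimensional K V' := Module.finite_of_finrank_pos (hV' ▸ hr)
  obtain ⟨_, ⟨e, he, he0, rfl⟩, heU⟩ := hP
  obtain ⟨_, ⟨e', he', he0', rfl⟩, heU'⟩ := hP'
  obtain ⟨b, A, hA, hclub⟩ := exists_range_restrictDual_eq_clubForms h hU (e := ⟨e, he⟩)
    (by simpa using he0) (by simpa using heU)
  obtain ⟨b', A', hA', hclub'⟩ := exists_range_restrictDual_eq_clubForms h' hU' (e := ⟨e', he'⟩)
    (by simpa using he0') (by simpa using heU')
  obtain ⟨g, hg⟩ := exists_map_dualMap_clubForms_eq_of_linearEquiv hA hA' θ fun x hx => by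
    rw [← hclub, ← hclub', ← span_singleton_mem_splash_iff h hr hV hinj hx,
      ← span_singleton_mem_splash_iff h' hr hV' hinj' (by simpa using hx), hθ x hx]
  obtain ⟨σ, τ, hτV, hτU⟩ := exists_linearEquiv_of_map_range_restrictDual_eq h h' hinj hinj' g
    (by rw [hclub, hclub', hg])
  refine ⟨τ, SetLike.coe_injective ?_, ?_⟩
  · exact image_eq_of_forall_apply_eq g.toEquiv hτU
  · rw [map_image_bSet, image_eq_of_forall_apply_eq σ.toEquiv hτV]

theorem splash_equivalence_linear_general
    (K L : Type*) [Field K] [Field L] [Algebra K L] (r : ℕ) (hr : 0 < r)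
    (W : Type*) [AddCommGroup W] [Module L W] [Module K W] [IsScalarTower K L W]
    (hW : finrank L W = r) (V₀ V₁ : Submodule K W)
    (hV₀rank : finrank K V₀ = r) (hV₀span : span L (V₀ : Set W) = ⊤)
    (hV₁rank : finrank K V₁ = r) (hV₁span : span L (V₁ : Set W) = ⊤)
    (U : Submodule L W) (hU : finrank L U = 2)
    (hP₀ : ∃ P ∈ BSet L (V₀ : Set W), P ≤ U) (hP₁ : ∃ P ∈ BSet L (V₁ : Set W), P ≤ U)
    (hext₀ : ∀ H : Submodule K W, H ≤ V₀ → finrank K H = r - 1 → ¬ U ≤ span L (H : Set W))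
    (hext₁ : ∀ H : Submodule K W, H ≤ V₁ → finrank K H = r - 1 → ¬ U ≤ span L (H : Set W)) :
    ((∃ θ : U ≃ₗ[L] U,
        {Q | ∃ x : U, (x : W) ≠ 0 ∧ span L {(x : W)} ∈ Splash K L V₀ U r ∧
            Q = span L {(θ x : W)}} = Splash K L V₁ U r) →
      ∃ τ : W ≃ₗ[L] W, Submodule.map (τ : W →ₗ[L] W) U = U ∧
        (fun P => Submodule.map (τ : W →ₗ[L] W) P) '' BSet L (V₀ : Set W)
          = BSet L (V₁ : Set W)) ∧
    (∀ τ : W ≃ₗ[L] W, Submodule.map (τ : W →ₗ[L] W) U = U →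
      (fun P => Submodule.map (τ : W →ₗ[L] W) P) '' BSet L (V₀ : Set W)
        = BSet L (V₁ : Set W) →
      (fun P => Submodule.map (τ : W →ₗ[L] W) P) '' Splash K L V₀ U r = Splash K L V₁ U r) := by
  have : FiniteDimensional K V₀ := Module.finite_of_finrank_pos (hV₀rank ▸ hr)
  have : FiniteDimensional K V₁ := Module.finite_of_finrank_pos (hV₁rank ▸ hr)
  have h₀ : IsBaseChange L V₀.subtype :=
    isBaseChange_of_span_range_eq_top (hV₀rank.trans hW.symm) (by simpa using hV₀span)
  have h₁ : IsBaseChange L V₁.subtype :=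
    isBaseChange_of_span_range_eq_top (hV₁rank.trans hW.symm) (by simpa using hV₁span)
  have hinj₀ := (restrictDual_injective_iff_forall_not_le_span h₀ hr hV₀rank).2 hext₀
  have hinj₁ := (restrictDual_injective_iff_forall_not_le_span h₁ hr hV₁rank).2 hext₁
  refine ⟨?_, map_image_splash_eq h₀ h₁ hr hV₀rank hV₁rank⟩
  rintro ⟨θ, hθ⟩
  exact exists_linearEquiv_of_splash_iff h₀ h₁ hr hV₀rank hV₁rank hU hU hP₀ hP₁ hinj₀ hinj₁ θ
    fun x => span_singleton_mem_iff_of_setOf_eq θ hθ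

end Equivalence

/-- (a) a projectivity of the line carrying one splash onto the other
extends to a projectivity of the whole space fixing the line and carrying one
subgeometry onto the other; (b) conversely, such a projectivity of the space carries
the first splash onto the second. -/
theorem splash_equivalence_linear
    (K L : Type*) [Field K] [Field L] [Algebra K L] [Fintype K] [Fintype L]
    (r n : ℕ) (hr : 3 ≤ r) (hrn : r ≤ n) (hrank : Module.finrank K L = n)
    (V₀ V₁ : Submodule K (Fin r → L))
    (hV₀rank : Module.finrank K V₀ = r)
    (hV₀span : Submodule.span L (V₀ : Set (Fin r → L)) = ⊤)
    (hV₁rank : Module.finrank K V₁ = r)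
    (hV₁span : Submodule.span L (V₁ : Set (Fin r → L)) = ⊤)
    (U : Submodule L (Fin r → L)) (hU : Module.finrank L U = 2)
    (htangent₀ : ∃! P, P ∈ BSet L (V₀ : Set (Fin r → L)) ∧ P ≤ U)
    (htangent₁ : ∃! P, P ∈ BSet L (V₁ : Set (Fin r → L)) ∧ P ≤ U)
    (hext₀ : ∀ H : Submodule K (Fin r → L), H ≤ V₀ → Module.finrank K H = r - 1 →
      ¬ U ≤ Submodule.span L (H : Set (Fin r → L)))
    (hext₁ : ∀ H : Submodule K (Fin r → L), H ≤ V₁ → Module.finrank K H = r - 1 →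
      ¬ U ≤ Submodule.span L (H : Set (Fin r → L))) :
    -- (a)
    ((∃ θ : U ≃ₗ[L] U,
        {Q | ∃ x : U, (x : Fin r → L) ≠ 0 ∧
            Submodule.span L {(x : Fin r → L)} ∈ Splash K L V₀ U r ∧
            Q = Submodule.span L {(θ x : Fin r → L)}} = Splash K L V₁ U r) →
      ∃ τ : (Fin r → L) ≃ₗ[L] (Fin r → L),
        Submodule.map (τ : (Fin r → L) →ₗ[L] (Fin r → L)) U = U ∧
        (fun P => Submodule.map (τ : (Fin r → L) →ₗ[L] (Fin r → L)) P) ''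
            BSet L (V₀ : Set (Fin r → L)) = BSet L (V₁ : Set (Fin r → L))) ∧
    -- (b)
    (∀ τ : (Fin r → L) ≃ₗ[L] (Fin r → L),
      Submodule.map (τ : (Fin r → L) →ₗ[L] (Fin r → L)) U = U →
      (fun P => Submodule.map (τ : (Fin r → L) →ₗ[L] (Fin r → L)) P) ''
          BSet L (V₀ : Set (Fin r → L)) = BSet L (V₁ : Set (Fin r → L)) →
      (fun P => Submodule.map (τ : (Fin r → L) →ₗ[L] (Fin r → L)) P) ''
          Splash K L V₀ U r = Splash K L V₁ U r) :=
  splash_equivalence_linear_general K L r (by omega) _ (by simp) V₀ V₁ hV₀rank hV₀span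
    hV₁rank hV₁span U hU htangent₀.exists htangent₁.exists hext₀ hext₁
end
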